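/- Let d ≥ 1, 2 ≤ p < ∞, and k = 2d(1/2 − 1/p). There exists a constant C > 0 such that for every Schwartz function f on ℝ^d: ‖(1−Δ)^{−k/2} f‖_{L^p(ℝ^d)} ≤ C·‖V_g f‖_{L^p(ℝ^{2d})}. -/

import Mathlib

open MeasureTheory Complex Real
open scoped ENNReal RealInnerProductSpace

noncomputable section

abbrev E (d : ℕ) : Type := EuclideanSpace ℝ (Fin d)

/-- Phase space `ℝ^{2d} = ℝ^d × ℝ^d`. -/
abbrev P (d : ℕ) : Type := E d × E d

/-- The complex conjugate of the wave packet `π(z)g`, Gaussian window `g(y)=exp(-|y|²/2)`. -/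
def pkbar (d : ℕ) (z : P d) (y : E d) : ℂ :=
  Complex.exp (-Complex.I * (⟪y, z.2⟫ : ℂ)) * Real.exp (-‖y - z.1‖ ^ 2 / 2)

/-- The short-time Fourier transform with Gaussian window. -/
def stft (d : ℕ) (u : E d → ℂ) (z : P d) : ℂ := ∫ y, u y * pkbar d z y

/-- The Fourier transform `ℱu(ξ) = ∫ exp(-i x·ξ) u(x) dx`. -/
def FT (d : ℕ) (u : E d → ℂ) (ξ : E d) : ℂ :=
  ∫ x, Complex.exp (-Complex.I * (⟪x, ξ⟫ : ℂ)) * u x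

/-- The Bessel potential `(1-Δ)^{k/2} u = ℱ⁻¹((1+|ξ|²)^{k/2} ℱu)`. -/
def bessel (d : ℕ) (k : ℝ) (u : E d → ℂ) (x : E d) : ℂ :=
  (((2 * π) ^ d : ℝ) : ℂ)⁻¹ *
    ∫ ξ, Complex.exp (Complex.I * (⟪x, ξ⟫ : ℂ)) * (((1 + ‖ξ‖ ^ 2) ^ (k / 2) : ℝ) : ℂ) *
      FT d u ξ

open FourierTransform SchwartzMap in
theorem fourier_ae_eq_fourier_toLp {V : Type*} [NormedAddCommGroup V] [InnerProductSpace ℝ V]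
    [FiniteDimensional ℝ V] [MeasurableSpace V] [BorelSpace V] {w : V → ℂ}
    (h₁ : Integrable w) (h₂ : MemLp w 2) :
    (𝓕 w : V → ℂ) =ᵐ[volume] (𝓕 (h₂.toLp w) : Lp (α := V) ℂ 2 volume) := by
  apply ae_eq_of_integral_contDiff_smul_eq
  · exact (VectorFourier.fourierIntegral_continuous Real.continuous_fourierChar
      (by exact continuous_inner) h₁).locallyIntegrable
  · exact (Lp.memLp _).locallyIntegrable (by norm_num)
  intro φ hφ hc
  have hc' : HasCompactSupport (fun x => (φ x : ℂ)) := hc.comp_left (g := fun x : ℝ => (x : ℂ)) rfl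
  have hd' : ContDiff ℝ ((⊤ : ℕ∞) : WithTop ℕ∞) (fun x => (φ x : ℂ)) := by
    exact Complex.ofRealCLM.contDiff.comp hφ
  let ψ : 𝓢(V, ℂ) := hc'.toSchwartzMap hd'
  have hψ : ∀ x, ψ x = (φ x : ℂ) := fun x => rfl
  have h := congrArg (fun T : 𝓢'(V, ℂ) => T ψ) (Lp.fourier_toTemperedDistribution_eq (h₂.toLp w))
  simp only [TemperedDistribution.fourier_apply, Lp.toTemperedDistribution_apply] at h
  have e1 : ∫ x, φ x • ((𝓕 (h₂.toLp w) : Lp (α := V) ℂ 2 volume) : V → ℂ) x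
      = ∫ x, ψ x • ((𝓕 (h₂.toLp w) : Lp (α := V) ℂ 2 volume) : V → ℂ) x := by
    simp [hψ]
  rw [e1, ← h]
  have e2 : ∫ x, (𝓕 ψ) x • ((h₂.toLp w : Lp (α := V) ℂ 2 volume) : V → ℂ) x = ∫ x, (𝓕 ψ) x • w x := by
    apply integral_congr_ae
    filter_upwards [h₂.coeFn_toLp] with x hx
    rw [hx]
  rw [e2]
  have := VectorFourier.integral_fourierIntegral_smul_eq_flip (L := innerₗ V) (μ := volume)
    (ν := volume) Real.continuous_fourierChar (by exact continuous_inner) ψ.integrable h₁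
  simp only [flip_innerₗ] at this
  have e3 : ∫ x, φ x • 𝓕 w x = ∫ x, ψ x • 𝓕 w x := by
    simp [hψ]
  rw [e3]
  exact this.symm

open FourierTransform in
theorem eLpNorm_fourier_eq {V : Type*} [NormedAddCommGroup V] [InnerProductSpace ℝ V]
    [FiniteDimensional ℝ V] [MeasurableSpace V] [BorelSpace V] {w : V → ℂ}
    (h₁ : Integrable w) (h₂ : MemLp w 2) :
    eLpNorm (𝓕 w) 2 volume = eLpNorm w 2 volume := by
  rw [eLpNorm_congr_ae (fourier_ae_eq_fourier_toLp h₁ h₂), ← Lp.enorm_def,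
    ← eLpNorm_congr_ae h₂.coeFn_toLp, ← Lp.enorm_def, ← ofReal_norm, ← ofReal_norm,
    Lp.norm_fourier_eq]

theorem lintegral_comp_smul_addHaar (d : ℕ) (f : E d → ℝ≥0∞) {c : ℝ} (hc : c ≠ 0) :
    ∫⁻ x, f (c • x) = ENNReal.ofReal |(c ^ d)⁻¹| * ∫⁻ x, f x := by
  have h := lintegral_map_equiv (μ := (volume : Measure (E d))) f
    (Homeomorph.smulOfNeZero c hc).toMeasurableEquiv
  have h2 := Measure.map_addHaar_smul (volume : Measure (E d)) hc
  have e : ((Homeomorph.smulOfNeZero c hc).toMeasurableEquiv : E d → E d) = (c • ·) := rfl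
  rw [e, h2, lintegral_smul_measure] at h
  simpa using h.symm

/-- The oscillatory integral `∫ exp(i y·ξ) w(ξ) dξ`. -/
def osc (d : ℕ) (w : E d → ℂ) (y : E d) : ℂ :=
  ∫ ξ, Complex.exp (Complex.I * (⟪y, ξ⟫ : ℂ)) * w ξ

open FourierTransform in
theorem osc_eq_fourier (d : ℕ) (w : E d → ℂ) (y : E d) :
    osc d w y = 𝓕 w ((-(2 * π)⁻¹) • y) := by
  rw [osc, Real.fourier_eq']
  congr 1 with ξ
  rw [smul_eq_mul, inner_smul_right, real_inner_comm]
  congr 2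
  push_cast
  field_simp

theorem lintegral_osc_sq (d : ℕ) {w : E d → ℂ} (h₁ : Integrable w) (h₂ : MemLp w 2) :
    ∫⁻ y, ‖osc d w y‖ₑ ^ (2 : ℝ) = ENNReal.ofReal ((2 * π) ^ d) * ∫⁻ ξ, ‖w ξ‖ₑ ^ (2 : ℝ) := by
  have h := eLpNorm_fourier_eq h₁ h₂
  have h' := congrArg (· ^ (2 : ℝ)) h
  simp only [eLpNorm_eq_lintegral_rpow_enorm_toReal two_ne_zero ENNReal.ofNat_ne_top] at h'
  simp only [ENNReal.toReal_ofNat, one_div, ← ENNReal.rpow_mul] at h'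
  norm_num at h'
  simp_rw [osc_eq_fourier]
  rw [lintegral_comp_smul_addHaar d (fun y => ‖FourierTransform.fourier w y‖ₑ ^ (2 : ℝ))
    (by simp [pi_ne_zero])]
  simp only [ENNReal.rpow_two]
  rw [h']
  congr 2
  rw [abs_inv, abs_pow, abs_neg, abs_inv, abs_of_pos (by positivity), inv_pow, inv_inv]

theorem measure_setOf_measure_le_le {X : Type*} [MeasurableSpace X] (ν : Measure X) (g : X → ℝ)
    (c : ℝ≥0∞) : ν {x | ν {y | g y ≤ g x} ≤ c} ≤ c := by
  set s := {x | ν {y | g y ≤ g x} ≤ c} with hs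
  by_cases hmax : ∃ x ∈ s, ∀ y ∈ s, g y ≤ g x
  · obtain ⟨x, hx, hxy⟩ := hmax
    exact (measure_mono hxy).trans hx
  push Not at hmax
  let ι := {q : ℚ // ∃ x ∈ s, (q : ℝ) ≤ g x}
  have hsub : s ⊆ ⋃ q : ι, {y | g y ≤ ((q : ℚ) : ℝ)} := by
    intro x hx
    obtain ⟨y, hy, hxy⟩ := hmax x hx
    obtain ⟨q, hq1, hq2⟩ := exists_rat_btwn hxy
    exact Set.mem_iUnion.2 ⟨⟨q, y, hy, hq2.le⟩, hq1.le⟩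
  have hmono : Monotone fun q : ι => {y | g y ≤ ((q : ℚ) : ℝ)} := by
    intro q q' h y hy
    have : ((q : ℚ) : ℝ) ≤ ((q' : ℚ) : ℝ) := by exact_mod_cast h
    exact le_trans hy this
  refine (measure_mono hsub).trans ?_
  rw [hmono.directed_le.measure_iUnion]
  refine iSup_le fun q => ?_
  obtain ⟨x, hx, hqx⟩ := q.2
  exact (measure_mono fun y (hy : g y ≤ _) => hy.trans hqx).trans hx

theorem enorm_smul_rpow {V : Type*} [NormedAddCommGroup V] [NormedSpace ℝ V] {r : ℝ} (hr : 0 < r)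
    (x : V) (s : ℝ) : ‖r • x‖ₑ ^ s = ENNReal.ofReal (r ^ s) * ‖x‖ₑ ^ s := by
  rw [enorm_smul, ENNReal.mul_rpow_of_ne_top enorm_ne_top enorm_ne_top,
    ← ENNReal.ofReal_rpow_of_pos hr, Real.enorm_eq_ofReal hr.le]

theorem lintegral_closedBall_rpow (d : ℕ) (hd : 1 ≤ d) {α : ℝ} (hα : α < d) :
    ∃ c : ℝ≥0∞, c ≠ ⊤ ∧ ∀ r : ℝ, 0 < r →
      ∫⁻ x : E d, (Metric.closedBall (0 : E d) r).indicator (fun x => ‖x‖ₑ ^ (-α)) x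
        = c * ENNReal.ofReal (r ^ (d - α)) := by
  refine ⟨∫⁻ x : E d, (Metric.closedBall (0 : E d) 1).indicator (fun x => ‖x‖ₑ ^ (-α)) x, ?_, ?_⟩
  · have h := integrableOn_ball_of_norm_le_rpow (μ := (volume : Measure (E d)))
      (f := fun x : E d => ‖x‖ ^ (-α)) (C := 1) (α := α) (r := 2) (by simpa using hd)
      (by simpa using hα) (Filter.Eventually.of_forall fun x => by
        rw [one_mul, Real.norm_of_nonneg (by positivity)])
      (measurable_norm.pow_const _).aestronglyMeasurable
    rw [lintegral_indicator Metric.isClosed_closedBall.measurableSet]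
    have h2 := h.mono_set (Metric.closedBall_subset_ball (x := (0 : E d)) (by norm_num : (1:ℝ) < 2))
    refine ne_of_lt (lt_of_le_of_lt (le_of_eq ?_) h2.2)
    have : Nontrivial (E d) := by
      apply Module.nontrivial_of_finrank_pos (R := ℝ)
      simpa using Nat.pos_of_ne_zero (by omega)
    apply lintegral_congr_ae
    filter_upwards [ae_restrict_of_ae (Measure.ae_ne volume (0 : E d))] with x hx
    have hx' : 0 < ‖x‖ := norm_pos_iff.2 hx
    rw [Real.enorm_eq_ofReal (by positivity), ← ENNReal.ofReal_rpow_of_pos hx', ofReal_norm]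
  · intro r hr
    have h := lintegral_comp_smul_addHaar d
      ((Metric.closedBall (0 : E d) r).indicator (fun x => ‖x‖ₑ ^ (-α))) hr.ne'
    have e : ∀ x : E d, (Metric.closedBall (0 : E d) r).indicator (fun x => ‖x‖ₑ ^ (-α)) (r • x)
        = ENNReal.ofReal (r ^ (-α)) *
          (Metric.closedBall (0 : E d) 1).indicator (fun x => ‖x‖ₑ ^ (-α)) x := by
      intro x
      by_cases hx : ‖x‖ ≤ 1
      · have : ‖r • x‖ ≤ r := by
          rw [norm_smul, Real.norm_of_nonneg hr.le]; nlinarith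
        rw [Set.indicator_of_mem (by simpa using this), Set.indicator_of_mem (by simpa using hx),
          enorm_smul_rpow hr]
      · have : ¬ ‖r • x‖ ≤ r := by
          rw [norm_smul, Real.norm_of_nonneg hr.le]; nlinarith
        rw [Set.indicator_of_notMem (by simpa using this),
          Set.indicator_of_notMem (by simpa using hx), mul_zero]
    simp_rw [e] at h
    rw [lintegral_const_mul' _ _ ENNReal.ofReal_ne_top] at h
    have h' := congrArg (ENNReal.ofReal (r ^ (d : ℝ)) * ·) h
    rw [← mul_assoc, ← mul_assoc, ← ENNReal.ofReal_mul (by positivity),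
      ← ENNReal.ofReal_mul (by positivity), ← Real.rpow_add hr, abs_of_pos (by positivity),
      Real.rpow_natCast, mul_inv_cancel₀ (by positivity), ENNReal.ofReal_one, one_mul] at h'
    rw [← h', mul_comm, sub_eq_add_neg]

theorem lintegral_compl_ball_rpow (d : ℕ) {β : ℝ} (hβ : d < β) :
    ∃ c : ℝ≥0∞, c ≠ ⊤ ∧ ∀ r : ℝ, 0 < r →
      ∫⁻ x : E d, {x : E d | r ≤ ‖x‖}.indicator (fun x => ‖x‖ₑ ^ (-β)) x
        = c * ENNReal.ofReal (r ^ (d - β)) := by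
  have hβ0 : 0 < β := lt_of_le_of_lt (Nat.cast_nonneg d) hβ
  refine ⟨∫⁻ x : E d, {x : E d | 1 ≤ ‖x‖}.indicator (fun x => ‖x‖ₑ ^ (-β)) x, ?_, ?_⟩
  · have h : Integrable (fun x : E d => (1 + ‖x‖) ^ (-β)) := integrable_one_add_norm (by simpa using hβ)
    have h2 := h.const_mul (2 ^ β)
    refine ne_of_lt (lt_of_le_of_lt (lintegral_mono fun x => ?_) h2.2)
    by_cases hx : 1 ≤ ‖x‖
    · rw [Set.indicator_of_mem (by exact hx), Real.enorm_eq_ofReal (by positivity), ← ofReal_norm,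
        ENNReal.ofReal_rpow_of_pos (by positivity)]
      apply ENNReal.ofReal_le_ofReal
      beta_reduce
      rw [Real.rpow_neg (by positivity), Real.rpow_neg (by positivity), ← div_eq_mul_inv,
        ← Real.div_rpow (by norm_num) (by positivity), ← Real.inv_rpow (by positivity)]
      apply Real.rpow_le_rpow (by positivity) _ hβ0.le
      rw [inv_eq_one_div, div_le_div_iff₀ (by positivity) (by positivity)]
      linarith
    · rw [Set.indicator_of_notMem (by exact hx)]
      exact zero_le
  · intro r hr
    have h := lintegral_comp_smul_addHaar d
      ({x : E d | r ≤ ‖x‖}.indicator (fun x => ‖x‖ₑ ^ (-β))) hr.ne'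
    have e : ∀ x : E d, {x : E d | r ≤ ‖x‖}.indicator (fun x => ‖x‖ₑ ^ (-β)) (r • x)
        = ENNReal.ofReal (r ^ (-β)) *
          {x : E d | 1 ≤ ‖x‖}.indicator (fun x => ‖x‖ₑ ^ (-β)) x := by
      intro x
      by_cases hx : 1 ≤ ‖x‖
      · have : r ≤ ‖r • x‖ := by
          rw [norm_smul, Real.norm_of_nonneg hr.le]; nlinarith
        rw [Set.indicator_of_mem (by simpa using this), Set.indicator_of_mem (by simpa using hx),
          enorm_smul_rpow hr]
      · have : ¬ r ≤ ‖r • x‖ := by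
          rw [norm_smul, Real.norm_of_nonneg hr.le]; nlinarith
        rw [Set.indicator_of_notMem (by simpa using this),
          Set.indicator_of_notMem (by simpa using hx), mul_zero]
    simp_rw [e] at h
    rw [lintegral_const_mul' _ _ ENNReal.ofReal_ne_top] at h
    have h' := congrArg (ENNReal.ofReal (r ^ (d : ℝ)) * ·) h
    rw [← mul_assoc, ← mul_assoc, ← ENNReal.ofReal_mul (by positivity),
      ← ENNReal.ofReal_mul (by positivity), ← Real.rpow_add hr, abs_of_pos (by positivity),
      Real.rpow_natCast, mul_inv_cancel₀ (by positivity), ENNReal.ofReal_one, one_mul] at h'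
    rw [← h', mul_comm, sub_eq_add_neg]

/-- The mass `∫_{|η| ≤ r} |w(η)| dη`. -/
def cumul (d : ℕ) (w : E d → ℂ) (r : ℝ) : ℝ≥0∞ := ∫⁻ η in Metric.closedBall (0 : E d) r, ‖w η‖ₑ

theorem measurable_cumul (d : ℕ) (w : E d → ℂ) : Measurable (cumul d w) := by
  apply Monotone.measurable
  intro r s h
  exact lintegral_mono_set (Metric.closedBall_subset_closedBall h)

theorem setLIntegral_cumul_le (d : ℕ) (w : E d → ℂ) (c : ℝ≥0∞) :
    ∫⁻ η in {ξ : E d | cumul d w ‖ξ‖ ≤ c}, ‖w η‖ₑ ≤ c := by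
  have hball : ∀ r : ℝ, {y : E d | ‖y‖ ≤ r} = Metric.closedBall 0 r := by
    intro r; ext y; simp
  have h := measure_setOf_measure_le_le ((volume : Measure (E d)).withDensity fun η => ‖w η‖ₑ)
    (fun x : E d => ‖x‖) c
  have hms : MeasurableSet {ξ : E d | cumul d w ‖ξ‖ ≤ c} :=
    measurableSet_le ((measurable_cumul d w).comp measurable_norm) measurable_const
  have e : {x : E d | ((volume : Measure (E d)).withDensity fun η => ‖w η‖ₑ)
      {y | ‖y‖ ≤ ‖x‖} ≤ c} = {ξ : E d | cumul d w ‖ξ‖ ≤ c} := by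
    ext x
    simp only [Set.mem_ofPred_eq, hball]
    rw [withDensity_apply _ Metric.isClosed_closedBall.measurableSet, cumul]
  rw [e, withDensity_apply _ hms] at h
  exact h

theorem continuous_osc (d : ℕ) {w : E d → ℂ} (h₁ : Integrable w) : Continuous (osc d w) := by
  have h : Continuous (FourierTransform.fourier w : E d → ℂ) :=
    VectorFourier.fourierIntegral_continuous Real.continuous_fourierChar
      (by exact continuous_inner) h₁
  have e : osc d w = fun y => FourierTransform.fourier w ((-(2 * π)⁻¹ : ℝ) • y) :=
    funext (osc_eq_fourier d w)
  rw [e]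
  exact h.comp (continuous_const_smul _)

theorem norm_cexp_I_mul_ofReal (t : ℝ) : ‖Complex.exp (Complex.I * (t : ℂ))‖ = 1 := by
  rw [mul_comm]; exact Complex.norm_exp_ofReal_mul_I t

theorem enorm_cexp_I_mul_ofReal (t : ℝ) : ‖Complex.exp (Complex.I * (t : ℂ))‖ₑ = 1 := by
  rw [← ofReal_norm, norm_cexp_I_mul_ofReal, ENNReal.ofReal_one]

theorem enorm_osc_le (d : ℕ) (w : E d → ℂ) (y : E d) : ‖osc d w y‖ₑ ≤ ∫⁻ ξ, ‖w ξ‖ₑ := by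
  refine (enorm_integral_le_lintegral_enorm _).trans (le_of_eq ?_)
  simp_rw [enorm_mul, enorm_cexp_I_mul_ofReal, one_mul]

theorem integrable_cexp_mul (d : ℕ) {w : E d → ℂ} (h₁ : Integrable w) (y : E d) :
    Integrable fun ξ => Complex.exp (Complex.I * (⟪y, ξ⟫ : ℂ)) * w ξ := by
  refine h₁.bdd_mul (c := 1) ?_ ?_
  · exact Continuous.aestronglyMeasurable (by fun_prop)
  · exact Filter.Eventually.of_forall fun ξ => (norm_cexp_I_mul_ofReal _).le

theorem osc_add (d : ℕ) {w v : E d → ℂ} (h₁ : Integrable w) (h₂ : Integrable v) (y : E d) :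
    osc d (w + v) y = osc d w y + osc d v y := by
  simp only [osc, Pi.add_apply, mul_add]
  exact integral_add (integrable_cexp_mul d h₁ y) (integrable_cexp_mul d h₂ y)

theorem measure_lt_norm_osc_le (d : ℕ) {w : E d → ℂ} (h₁ : Integrable w)
    (h₂ : MemLp w 2) {t : ℝ} (ht : 0 < t) :
    volume {y | t < ‖osc d w y‖} ≤ ENNReal.ofReal (4 * (2 * π) ^ d * t ^ (-2 : ℝ)) *
      ∫⁻ ξ, {ξ : E d | ENNReal.ofReal (t / 2) < cumul d w ‖ξ‖}.indicator
        (fun ξ => ‖w ξ‖ₑ ^ (2 : ℝ)) ξ := by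
  set lo := {ξ : E d | cumul d w ‖ξ‖ ≤ ENNReal.ofReal (t / 2)} with hlo
  have hms : MeasurableSet lo :=
    measurableSet_le ((measurable_cumul d w).comp measurable_norm) measurable_const
  have hhi : {ξ : E d | ENNReal.ofReal (t / 2) < cumul d w ‖ξ‖} = loᶜ := by
    ext ξ; simp [hlo]
  rw [hhi]
  have hsum : w = lo.indicator w + loᶜ.indicator w := (Set.indicator_self_add_compl lo w).symm
  have hbound : ∀ y, ‖osc d (lo.indicator w) y‖ ≤ t / 2 := by
    intro y
    have h := enorm_osc_le d (lo.indicator w) y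
    simp_rw [enorm_indicator_eq_indicator_enorm] at h
    rw [lintegral_indicator hms] at h
    have h' := h.trans (setLIntegral_cumul_le d w _)
    rw [← ofReal_norm] at h'
    exact (ENNReal.ofReal_le_ofReal_iff (by positivity)).1 h'
  have hsub : {y | t < ‖osc d w y‖} ⊆
      {y | ENNReal.ofReal (t / 2) ^ (2 : ℝ) ≤ ‖osc d (loᶜ.indicator w) y‖ₑ ^ (2 : ℝ)} := by
    intro y hy
    have hy' : t < ‖osc d w y‖ := hy
    have e : osc d w y = osc d (lo.indicator w) y + osc d (loᶜ.indicator w) y := by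
      conv_lhs => rw [hsum]
      exact osc_add d (h₁.indicator hms) (h₁.indicator hms.compl) y
    have h3 : t / 2 ≤ ‖osc d (loᶜ.indicator w) y‖ := by
      have := norm_add_le (osc d (lo.indicator w) y) (osc d (loᶜ.indicator w) y)
      rw [← e] at this
      linarith [hbound y]
    show ENNReal.ofReal (t / 2) ^ (2 : ℝ) ≤ ‖osc d (loᶜ.indicator w) y‖ₑ ^ (2 : ℝ)
    apply ENNReal.rpow_le_rpow _ (by norm_num)
    rw [← ofReal_norm]
    exact ENNReal.ofReal_le_ofReal h3
  refine (measure_mono hsub).trans ?_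
  have hne : ENNReal.ofReal (t / 2) ^ (2 : ℝ) ≠ 0 := by
    rw [ENNReal.ofReal_rpow_of_pos (by positivity)]
    simp only [ne_eq, ENNReal.ofReal_eq_zero, not_le]
    positivity
  have hm := meas_ge_le_lintegral_div (μ := (volume : Measure (E d)))
    (f := fun y => ‖osc d (loᶜ.indicator w) y‖ₑ ^ (2 : ℝ))
    (((continuous_osc d (h₁.indicator hms.compl)).enorm.measurable.pow_const _).aemeasurable)
    hne (by simp)
  refine hm.trans ?_
  rw [lintegral_osc_sq d (h₁.indicator hms.compl) (h₂.indicator hms.compl)]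
  have e4 : ∀ ξ, ‖loᶜ.indicator w ξ‖ₑ ^ (2 : ℝ) = loᶜ.indicator (fun ξ => ‖w ξ‖ₑ ^ (2 : ℝ)) ξ := by
    intro ξ
    by_cases hξ : ξ ∈ loᶜ
    · rw [Set.indicator_of_mem hξ, Set.indicator_of_mem hξ]
    · rw [Set.indicator_of_notMem hξ, Set.indicator_of_notMem hξ]; simp
  simp_rw [e4]
  rw [ENNReal.ofReal_rpow_of_pos (by positivity), ENNReal.div_eq_inv_mul, ← mul_assoc,
    ← ENNReal.ofReal_inv_of_pos (by positivity), ← ENNReal.ofReal_mul (by positivity)]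
  apply le_of_eq
  congr 2
  rw [Real.div_rpow ht.le (by norm_num), Real.rpow_neg ht.le]
  norm_num
  field_simp

theorem lintegral_ofReal_rpow_le {s : ℝ} (hs : 0 < s) {N : ℝ≥0∞} (hN : N ≠ ⊤) :
    ∫⁻ t in Set.Ioi (0 : ℝ), {t : ℝ | ENNReal.ofReal (t / 2) < N}.indicator
      (fun t => ENNReal.ofReal (t ^ (s - 1))) t ≤ ENNReal.ofReal (2 ^ s / s) * N ^ s := by
  lift N to NNReal using hN
  have hset : {t : ℝ | ENNReal.ofReal (t / 2) < (N : ℝ≥0∞)} ∩ Set.Ioi 0 ⊆ Set.Ioc 0 (2 * N) := by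
    rintro t ⟨h1, h2⟩
    have h1' : ENNReal.ofReal (t / 2) < (N : ℝ≥0∞) := h1
    rw [← ENNReal.ofReal_coe_nnreal, ENNReal.ofReal_lt_ofReal_iff_of_nonneg
      (by have : (0:ℝ) < t := h2; positivity)] at h1'
    exact ⟨h2, by linarith⟩
  have hms : MeasurableSet {t : ℝ | ENNReal.ofReal (t / 2) < (N : ℝ≥0∞)} :=
    measurableSet_lt (by fun_prop) measurable_const
  rw [lintegral_indicator hms, Measure.restrict_restrict hms]
  refine (lintegral_mono_set hset).trans ?_
  have hN0 : (0 : ℝ) ≤ 2 * N := by positivity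
  have hintg : IntervalIntegrable (fun t : ℝ => t ^ (s - 1)) volume 0 (2 * N) :=
    intervalIntegral.intervalIntegrable_rpow' (by linarith)
  rw [← ofReal_integral_eq_lintegral_ofReal
    ((intervalIntegrable_iff_integrableOn_Ioc_of_le hN0).1 hintg)
    (by
      filter_upwards [ae_restrict_mem measurableSet_Ioc] with t ht
      exact Real.rpow_nonneg ht.1.le _),
    ← intervalIntegral.integral_of_le hN0, integral_rpow (Or.inl (by linarith))]
  rw [← ENNReal.ofReal_coe_nnreal, ENNReal.ofReal_rpow_of_nonneg N.coe_nonneg hs.le,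
    ← ENNReal.ofReal_mul (by positivity)]
  apply ENNReal.ofReal_le_ofReal
  rw [sub_add_cancel, Real.zero_rpow hs.ne', sub_zero, Real.mul_rpow (by norm_num) N.coe_nonneg]
  apply le_of_eq
  ring

theorem lintegral_osc_rpow_le (d : ℕ) {p : ℝ} (hp : 2 < p) {w : E d → ℂ} (hm : Measurable w)
    (h₁ : Integrable w) (h₂ : MemLp w 2) :
    ∫⁻ y, ‖osc d w y‖ₑ ^ p ≤
      ENNReal.ofReal p * (ENNReal.ofReal (4 * (2 * π) ^ d) * ENNReal.ofReal (2 ^ (p - 2) / (p - 2))) *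
        ∫⁻ ξ, ‖w ξ‖ₑ ^ (2 : ℝ) * cumul d w ‖ξ‖ ^ (p - 2) := by
  have hlc := lintegral_rpow_eq_lintegral_meas_lt_mul (volume : Measure (E d))
    (f := fun y => ‖osc d w y‖) (Filter.Eventually.of_forall fun y => norm_nonneg _)
    (continuous_osc d h₁).norm.measurable.aemeasurable (p := p) (by linarith)
  have e1 : ∀ y, ENNReal.ofReal (‖osc d w y‖ ^ p) = ‖osc d w y‖ₑ ^ p := by
    intro y
    rw [← ofReal_norm, ENNReal.ofReal_rpow_of_nonneg (norm_nonneg _) (by linarith)]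
  simp_rw [e1] at hlc
  rw [hlc, mul_assoc]
  gcongr
  have hmm : Measurable fun z : ℝ × E d => {z : ℝ × E d | ENNReal.ofReal (z.1 / 2) < cumul d w ‖z.2‖}.indicator
      (fun z => ENNReal.ofReal (z.1 ^ ((p - 2) - 1)) * ‖w z.2‖ₑ ^ (2 : ℝ)) z := by
    apply Measurable.indicator
    · exact (ENNReal.measurable_ofReal.comp (measurable_fst.pow_const _)).mul
        ((hm.comp measurable_snd).enorm.pow_const _)
    · exact measurableSet_lt (by fun_prop)
        ((measurable_cumul d w).comp (measurable_norm.comp measurable_snd))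
  calc ∫⁻ t in Set.Ioi (0 : ℝ), volume {y | t < ‖osc d w y‖} * ENNReal.ofReal (t ^ (p - 1))
      ≤ ∫⁻ t in Set.Ioi (0 : ℝ), ENNReal.ofReal (4 * (2 * π) ^ d) * ∫⁻ ξ,
        {z : ℝ × E d | ENNReal.ofReal (z.1 / 2) < cumul d w ‖z.2‖}.indicator
          (fun z => ENNReal.ofReal (z.1 ^ ((p - 2) - 1)) * ‖w z.2‖ₑ ^ (2 : ℝ)) (t, ξ) := by
        apply setLIntegral_mono' measurableSet_Ioi
        intro t ht
        have ht' : 0 < t := ht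
        refine (mul_le_mul_left (measure_lt_norm_osc_le d h₁ h₂ ht') _).trans (le_of_eq ?_)
        rw [ENNReal.ofReal_mul (by positivity), mul_assoc, mul_assoc]
        congr 1
        have e3 : ∀ ξ, {z : ℝ × E d | ENNReal.ofReal (z.1 / 2) < cumul d w ‖z.2‖}.indicator
          (fun z => ENNReal.ofReal (z.1 ^ ((p - 2) - 1)) * ‖w z.2‖ₑ ^ (2 : ℝ)) (t, ξ)
          = ENNReal.ofReal (t ^ ((p - 2) - 1)) * {ξ : E d | ENNReal.ofReal (t / 2) < cumul d w ‖ξ‖}.indicator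
              (fun ξ => ‖w ξ‖ₑ ^ (2 : ℝ)) ξ := by
          intro ξ
          by_cases hξ : ENNReal.ofReal (t / 2) < cumul d w ‖ξ‖
          · rw [Set.indicator_of_mem (by exact hξ), Set.indicator_of_mem (by exact hξ)]
          · rw [Set.indicator_of_notMem (by exact hξ), Set.indicator_of_notMem (by exact hξ), mul_zero]
        simp_rw [e3]
        rw [lintegral_const_mul' _ _ ENNReal.ofReal_ne_top, mul_comm (lintegral _ _), ← mul_assoc,
          ← ENNReal.ofReal_mul (by positivity), ← Real.rpow_add ht']
        congr 3
        ring
    _ = ENNReal.ofReal (4 * (2 * π) ^ d) * ∫⁻ ξ, ∫⁻ t in Set.Ioi (0 : ℝ),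
        {z : ℝ × E d | ENNReal.ofReal (z.1 / 2) < cumul d w ‖z.2‖}.indicator
          (fun z => ENNReal.ofReal (z.1 ^ ((p - 2) - 1)) * ‖w z.2‖ₑ ^ (2 : ℝ)) (t, ξ) := by
        rw [lintegral_const_mul' _ _ ENNReal.ofReal_ne_top, lintegral_lintegral_swap]
        exact hmm.aemeasurable
    _ ≤ ENNReal.ofReal (4 * (2 * π) ^ d) * ∫⁻ ξ, ENNReal.ofReal (2 ^ (p - 2) / (p - 2)) *
          (‖w ξ‖ₑ ^ (2 : ℝ) * cumul d w ‖ξ‖ ^ (p - 2)) := by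
        gcongr with ξ
        have hN : cumul d w ‖ξ‖ ≠ ⊤ :=
          ne_of_lt (lt_of_le_of_lt (setLIntegral_le_lintegral _ _) h₁.2)
        have e3 : ∀ t, {z : ℝ × E d | ENNReal.ofReal (z.1 / 2) < cumul d w ‖z.2‖}.indicator
          (fun z => ENNReal.ofReal (z.1 ^ ((p - 2) - 1)) * ‖w z.2‖ₑ ^ (2 : ℝ)) (t, ξ)
          = ‖w ξ‖ₑ ^ (2 : ℝ) * {t : ℝ | ENNReal.ofReal (t / 2) < cumul d w ‖ξ‖}.indicator
              (fun t => ENNReal.ofReal (t ^ ((p - 2) - 1))) t := by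
          intro t
          by_cases hξ : ENNReal.ofReal (t / 2) < cumul d w ‖ξ‖
          · rw [Set.indicator_of_mem (by exact hξ), Set.indicator_of_mem (by exact hξ), mul_comm]
          · rw [Set.indicator_of_notMem (by exact hξ), Set.indicator_of_notMem (by exact hξ), mul_zero]
        simp_rw [e3]
        rw [lintegral_const_mul' _ _ (by simp)]
        refine (mul_le_mul_right (lintegral_ofReal_rpow_le (by linarith : 0 < p - 2) hN) _).trans
          (le_of_eq ?_)
        ring
    _ = _ := by
        rw [lintegral_const_mul' _ _ ENNReal.ofReal_ne_top, mul_assoc]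

theorem nontrivial_E {d : ℕ} (hd : 1 ≤ d) : Nontrivial (E d) := by
  apply Module.nontrivial_of_finrank_pos (R := ℝ)
  simpa using Nat.pos_of_ne_zero (by omega)

theorem enorm_rpow_add {V : Type*} [NormedAddCommGroup V] {x : V} (hx : x ≠ 0) (s t : ℝ) :
    ‖x‖ₑ ^ s * ‖x‖ₑ ^ t = ‖x‖ₑ ^ (s + t) :=
  (ENNReal.rpow_add _ _ (by simpa using hx) enorm_ne_top).symm

theorem ofReal_norm_rpow {V : Type*} [NormedAddCommGroup V] {x : V} (hx : x ≠ 0) (s : ℝ) :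
    ENNReal.ofReal (‖x‖ ^ s) = ‖x‖ₑ ^ s := by
  rw [← ENNReal.ofReal_rpow_of_pos (norm_pos_iff.2 hx), ofReal_norm]

/-- Pointwise Hölder bound behind the weighted Hardy inequality. -/
theorem cumul_rpow_le (d : ℕ) (hd : 1 ≤ d) {p : ℝ} (hp : 2 < p) :
    ∃ c : ℝ≥0∞, c ≠ ⊤ ∧ ∀ w : E d → ℂ, Measurable w → ∀ ξ : E d, ξ ≠ 0 →
      cumul d w ‖ξ‖ ^ p ≤ c * (‖ξ‖ₑ ^ ((d : ℝ) / 2) *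
        ∫⁻ η in Metric.closedBall (0 : E d) ‖ξ‖, ‖w η‖ₑ ^ p * ‖η‖ₑ ^ (d * (p - 3 / 2))) := by
  have := nontrivial_E hd
  have hd0 : (0 : ℝ) < d := by exact_mod_cast hd
  have hp1 : 0 < p - 1 := by linarith
  have hα : d * (p - 3 / 2) / (p - 1) < d := by
    rw [div_lt_iff₀ hp1]; nlinarith
  obtain ⟨c, hc, hcr⟩ := lintegral_closedBall_rpow d hd hα
  refine ⟨c ^ (p - 1), ENNReal.rpow_ne_top_of_nonneg hp1.le hc, fun w hw ξ hξ => ?_⟩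
  set a := d * (p - 3 / 2) / p with ha
  have hpq : p.HolderConjugate (p / (p - 1)) := Real.HolderConjugate.conjExponent (by linarith)
  have hH := ENNReal.lintegral_mul_le_Lp_mul_Lq
    (volume.restrict (Metric.closedBall (0 : E d) ‖ξ‖)) hpq
    (f := fun η => ‖w η‖ₑ * ‖η‖ₑ ^ a) (g := fun η => ‖η‖ₑ ^ (-a))
    ((hw.enorm.mul (measurable_enorm.pow_const _)).aemeasurable)
    ((measurable_enorm.pow_const _).aemeasurable)
  have e1 : cumul d w ‖ξ‖ = ∫⁻ η in Metric.closedBall (0 : E d) ‖ξ‖,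
      ((fun η => ‖w η‖ₑ * ‖η‖ₑ ^ a) * (fun η => ‖η‖ₑ ^ (-a)) : E d → ℝ≥0∞) η := by
    apply lintegral_congr_ae
    filter_upwards [ae_restrict_of_ae (Measure.ae_ne volume (0 : E d))] with η hη
    simp only [Pi.mul_apply]
    rw [mul_assoc, enorm_rpow_add hη, add_neg_cancel, ENNReal.rpow_zero, mul_one]
  have e2 : ∀ η : E d, (‖w η‖ₑ * ‖η‖ₑ ^ a) ^ p = ‖w η‖ₑ ^ p * ‖η‖ₑ ^ (d * (p - 3 / 2)) := by
    intro η
    rw [ENNReal.mul_rpow_of_nonneg _ _ (by linarith), ← ENNReal.rpow_mul, ha,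
      div_mul_cancel₀ _ (by linarith : p ≠ 0)]
  have e3 : ∀ η : E d, (‖η‖ₑ ^ (-a)) ^ (p / (p - 1)) = ‖η‖ₑ ^ (-(d * (p - 3 / 2) / (p - 1))) := by
    intro η
    rw [← ENNReal.rpow_mul, ha]
    congr 1
    have : p ≠ 0 := by linarith
    field_simp
  rw [← e1] at hH
  simp_rw [e2, e3] at hH
  have h4 := hcr ‖ξ‖ (norm_pos_iff.2 hξ)
  rw [lintegral_indicator Metric.isClosed_closedBall.measurableSet] at h4
  rw [h4] at hH
  have h5 := ENNReal.rpow_le_rpow hH (by linarith : 0 ≤ p)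
  refine h5.trans (le_of_eq ?_)
  rw [ENNReal.mul_rpow_of_nonneg _ _ (by linarith), ← ENNReal.rpow_mul, ← ENNReal.rpow_mul,
    one_div_mul_cancel (by linarith), ENNReal.rpow_one]
  have : 1 / (p / (p - 1)) * p = p - 1 := by
    have : p ≠ 0 := by linarith
    field_simp
  rw [this, ENNReal.mul_rpow_of_nonneg _ _ hp1.le, ofReal_norm_rpow hξ, ← ENNReal.rpow_mul]
  have : (d - d * (p - 3 / 2) / (p - 1)) * (p - 1) = d / 2 := by
    field_simp
    ring
  rw [this]
  ring

theorem lintegral_cumul_rpow_le (d : ℕ) (hd : 1 ≤ d) {p : ℝ} (hp : 2 < p) :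
    ∃ c : ℝ≥0∞, c ≠ ⊤ ∧ ∀ w : E d → ℂ, Measurable w →
      ∫⁻ ξ : E d, cumul d w ‖ξ‖ ^ p * ‖ξ‖ₑ ^ (-(2 * d : ℝ)) ≤
        c * ∫⁻ η, ‖w η‖ₑ ^ p * ‖η‖ₑ ^ (d * (p - 2)) := by
  have := nontrivial_E hd
  have hd0 : (0 : ℝ) < d := by exact_mod_cast hd
  obtain ⟨c₁, hc₁, h₁⟩ := cumul_rpow_le d hd hp
  obtain ⟨c₂, hc₂, h₂⟩ := lintegral_compl_ball_rpow d (β := 3 * d / 2) (by linarith)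
  refine ⟨c₁ * c₂, ENNReal.mul_ne_top hc₁ hc₂, fun w hw => ?_⟩
  set Φ : E d → ℝ≥0∞ := fun η => ‖w η‖ₑ ^ p * ‖η‖ₑ ^ (d * (p - 3 / 2)) with hΦ
  have hΦm : Measurable Φ := (hw.enorm.pow_const _).mul (measurable_enorm.pow_const _)
  have hmm : Measurable fun z : E d × E d => {z : E d × E d | ‖z.2‖ ≤ ‖z.1‖}.indicator
      (fun z => ‖z.1‖ₑ ^ (-(3 * d / 2 : ℝ)) * Φ z.2) z := by
    apply Measurable.indicator
    · exact (measurable_fst.enorm.pow_const _).mul (hΦm.comp measurable_snd)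
    · exact measurableSet_le measurable_snd.norm measurable_fst.norm
  calc ∫⁻ ξ : E d, cumul d w ‖ξ‖ ^ p * ‖ξ‖ₑ ^ (-(2 * d : ℝ))
      ≤ ∫⁻ ξ : E d, c₁ * ∫⁻ η, {z : E d × E d | ‖z.2‖ ≤ ‖z.1‖}.indicator
          (fun z => ‖z.1‖ₑ ^ (-(3 * d / 2 : ℝ)) * Φ z.2) (ξ, η) := by
        apply lintegral_mono_ae
        filter_upwards [Measure.ae_ne volume (0 : E d)] with ξ hξ
        refine (mul_le_mul_left (h₁ w hw ξ hξ) _).trans (le_of_eq ?_)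
        rw [← lintegral_indicator Metric.isClosed_closedBall.measurableSet]
        have e : ∀ η, {z : E d × E d | ‖z.2‖ ≤ ‖z.1‖}.indicator
            (fun z => ‖z.1‖ₑ ^ (-(3 * d / 2 : ℝ)) * Φ z.2) (ξ, η)
            = ‖ξ‖ₑ ^ (-(3 * d / 2 : ℝ)) * (Metric.closedBall (0 : E d) ‖ξ‖).indicator Φ η := by
          intro η
          by_cases hη : ‖η‖ ≤ ‖ξ‖
          · rw [Set.indicator_of_mem (by exact hη), Set.indicator_of_mem (by simpa using hη)]
          · rw [Set.indicator_of_notMem (by exact hη), Set.indicator_of_notMem (by simpa using hη),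
              mul_zero]
        simp_rw [e]
        rw [lintegral_const_mul _ (hΦm.indicator Metric.isClosed_closedBall.measurableSet),
          mul_assoc]
        congr 1
        rw [mul_right_comm, enorm_rpow_add hξ]
        congr 2
        ring
    _ = c₁ * ∫⁻ η, ∫⁻ ξ : E d, {z : E d × E d | ‖z.2‖ ≤ ‖z.1‖}.indicator
          (fun z => ‖z.1‖ₑ ^ (-(3 * d / 2 : ℝ)) * Φ z.2) (ξ, η) := by
        rw [lintegral_const_mul' _ _ hc₁, lintegral_lintegral_swap]
        exact hmm.aemeasurable
    _ ≤ c₁ * ∫⁻ η, c₂ * (‖w η‖ₑ ^ p * ‖η‖ₑ ^ (d * (p - 2))) := by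
        refine mul_le_mul' le_rfl ?_
        apply lintegral_mono_ae
        filter_upwards [Measure.ae_ne volume (0 : E d)] with η hη
        have e : ∀ ξ, {z : E d × E d | ‖z.2‖ ≤ ‖z.1‖}.indicator
            (fun z => ‖z.1‖ₑ ^ (-(3 * d / 2 : ℝ)) * Φ z.2) (ξ, η)
            = {ξ : E d | ‖η‖ ≤ ‖ξ‖}.indicator (fun ξ => ‖ξ‖ₑ ^ (-(3 * d / 2 : ℝ))) ξ * Φ η := by
          intro ξ
          by_cases h : ‖η‖ ≤ ‖ξ‖
          · rw [Set.indicator_of_mem (by exact h), Set.indicator_of_mem (by exact h)]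
          · rw [Set.indicator_of_notMem (by exact h), Set.indicator_of_notMem (by exact h),
              zero_mul]
        simp_rw [e]
        rw [lintegral_mul_const _ ((measurable_enorm.pow_const _).indicator
          (measurableSet_le measurable_const measurable_norm)), h₂ _ (norm_pos_iff.2 hη),
          ofReal_norm_rpow hη, hΦ]
        apply le_of_eq
        simp only
        rw [mul_assoc, mul_left_comm (‖η‖ₑ ^ _), enorm_rpow_add hη]
        congr 3
        ring
    _ = _ := by
        rw [lintegral_const_mul' _ _ hc₂, mul_assoc]

/-- The Hardy–Littlewood (Pitt) inequality for the Fourier transform, `2 ≤ p < ∞`. -/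
theorem lintegral_osc_rpow_le_weighted (d : ℕ) (hd : 1 ≤ d) {p : ℝ} (hp : 2 ≤ p) :
    ∃ c : ℝ≥0∞, c ≠ ⊤ ∧ ∀ w : E d → ℂ, Measurable w → Integrable w → MemLp w 2 →
      ∫⁻ y, ‖osc d w y‖ₑ ^ p ≤ c * ∫⁻ ξ, ‖w ξ‖ₑ ^ p * ‖ξ‖ₑ ^ (d * (p - 2)) := by
  have := nontrivial_E hd
  rcases hp.eq_or_lt with rfl | hp
  · refine ⟨ENNReal.ofReal ((2 * π) ^ d), ENNReal.ofReal_ne_top, fun w hw h₁ h₂ =>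
      (lintegral_osc_sq d h₁ h₂).le.trans ?_⟩
    simp
  obtain ⟨c, hc, hH⟩ := lintegral_cumul_rpow_le d hd hp
  have hp2 : 0 < p - 2 := by linarith
  refine ⟨ENNReal.ofReal p * (ENNReal.ofReal (4 * (2 * π) ^ d) *
    ENNReal.ofReal (2 ^ (p - 2) / (p - 2))) * c ^ ((p - 2) / p), ?_, fun w hw h₁ h₂ => ?_⟩
  · have : c ^ ((p - 2) / p) ≠ ⊤ := ENNReal.rpow_ne_top_of_nonneg (by positivity) hc
    finiteness
  refine (lintegral_osc_rpow_le d hp hw h₁ h₂).trans ?_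
  rw [mul_assoc _ (c ^ _)]
  refine mul_le_mul' le_rfl ?_
  set I := ∫⁻ ξ, ‖w ξ‖ₑ ^ p * ‖ξ‖ₑ ^ (d * (p - 2)) with hI
  set b := 2 * d * (p - 2) / p with hb
  have hpq : (p / 2).HolderConjugate (p / (p - 2)) := by
    rw [Real.holderConjugate_iff]
    constructor
    · linarith
    · field_simp
      ring
  have hHol := ENNReal.lintegral_mul_le_Lp_mul_Lq (volume : Measure (E d)) hpq
    (f := fun ξ => ‖w ξ‖ₑ ^ (2 : ℝ) * ‖ξ‖ₑ ^ b)
    (g := fun ξ => cumul d w ‖ξ‖ ^ (p - 2) * ‖ξ‖ₑ ^ (-b))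
    ((hw.enorm.pow_const _).mul (measurable_enorm.pow_const _)).aemeasurable
    ((((measurable_cumul d w).comp measurable_norm).pow_const _).mul
      (measurable_enorm.pow_const _)).aemeasurable
  have e1 : ∫⁻ ξ, ‖w ξ‖ₑ ^ (2 : ℝ) * cumul d w ‖ξ‖ ^ (p - 2)
      = ∫⁻ ξ, ((fun ξ => ‖w ξ‖ₑ ^ (2 : ℝ) * ‖ξ‖ₑ ^ b) *
        (fun ξ => cumul d w ‖ξ‖ ^ (p - 2) * ‖ξ‖ₑ ^ (-b)) : E d → ℝ≥0∞) ξ := by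
    apply lintegral_congr_ae
    filter_upwards [Measure.ae_ne volume (0 : E d)] with ξ hξ
    simp only [Pi.mul_apply]
    rw [mul_mul_mul_comm, enorm_rpow_add hξ, add_neg_cancel, ENNReal.rpow_zero, mul_one]
  have hp0 : p ≠ 0 := by linarith
  have e2 : ∀ ξ : E d, (‖w ξ‖ₑ ^ (2 : ℝ) * ‖ξ‖ₑ ^ b) ^ (p / 2)
      = ‖w ξ‖ₑ ^ p * ‖ξ‖ₑ ^ (d * (p - 2)) := by
    intro ξ
    rw [ENNReal.mul_rpow_of_nonneg _ _ (by linarith), ← ENNReal.rpow_mul, ← ENNReal.rpow_mul, hb]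
    congr 2 <;> field_simp
  have e3 : ∀ ξ : E d, (cumul d w ‖ξ‖ ^ (p - 2) * ‖ξ‖ₑ ^ (-b)) ^ (p / (p - 2))
      = cumul d w ‖ξ‖ ^ p * ‖ξ‖ₑ ^ (-(2 * d : ℝ)) := by
    intro ξ
    rw [ENNReal.mul_rpow_of_nonneg _ _ (by positivity), ← ENNReal.rpow_mul, ← ENNReal.rpow_mul, hb]
    congr 2 <;> field_simp
  rw [← e1] at hHol
  simp_rw [e2, e3] at hHol
  refine hHol.trans ?_
  rw [← hI]
  calc I ^ (1 / (p / 2)) * (∫⁻ ξ, cumul d w ‖ξ‖ ^ p * ‖ξ‖ₑ ^ (-(2 * d : ℝ))) ^ (1 / (p / (p - 2)))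
      ≤ I ^ (1 / (p / 2)) * (c * I) ^ (1 / (p / (p - 2))) := by
        gcongr
        exact hH w hw
    _ = c ^ ((p - 2) / p) * I := by
        rw [one_div_div, one_div_div, ENNReal.mul_rpow_of_nonneg _ _ (by positivity),
          mul_left_comm, ← ENNReal.rpow_add_of_nonneg _ _ (by positivity) (by positivity)]
        rw [← add_div, add_sub_cancel, div_self hp0, ENNReal.rpow_one]

/-- Young's inequality `‖a * b‖_p ≤ ‖a‖_p ‖b‖_1`, at the level of `p`-th powers. -/
theorem lintegral_convolution_rpow_le (d : ℕ) {p : ℝ} (hp : 1 < p) {a b : E d → ℝ≥0∞}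
    (ha : Measurable a) (hb : Measurable b) :
    ∫⁻ x, (∫⁻ y, a y * b (x - y)) ^ p ≤ (∫⁻ y, b y) ^ p * ∫⁻ y, a y ^ p := by
  have hpq : p.HolderConjugate (p / (p - 1)) := Real.HolderConjugate.conjExponent hp
  have hp0 : p ≠ 0 := by linarith
  have hp1 : p - 1 ≠ 0 := by linarith
  have hbx : ∀ x, Measurable fun y => b (x - y) := fun x => hb.comp (measurable_const.sub measurable_id)
  have key : ∀ x, (∫⁻ y, a y * b (x - y)) ^ p ≤
      (∫⁻ y, b y) ^ (p - 1) * ∫⁻ y, a y ^ p * b (x - y) := by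
    intro x
    have h := ENNReal.lintegral_mul_le_Lp_mul_Lq (volume.withDensity fun y => b (x - y)) hpq
      (f := a) (g := fun _ => 1) ha.aemeasurable aemeasurable_const
    simp only [ENNReal.one_rpow, Pi.mul_apply, mul_one] at h
    rw [lintegral_withDensity_eq_lintegral_mul _ (hbx x) ha,
      lintegral_withDensity_eq_lintegral_mul _ (hbx x) (ha.pow_const _),
      lintegral_withDensity_eq_lintegral_mul _ (hbx x) measurable_const] at h
    simp only [Pi.mul_apply, mul_one] at h
    rw [lintegral_sub_left_eq_self b x] at h
    have h' := ENNReal.rpow_le_rpow h (by linarith : 0 ≤ p)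
    rw [ENNReal.mul_rpow_of_nonneg _ _ (by linarith), ← ENNReal.rpow_mul, ← ENNReal.rpow_mul,
      one_div_mul_cancel hp0, ENNReal.rpow_one,
      show 1 / (p / (p - 1)) * p = p - 1 by field_simp, mul_comm] at h'
    simpa only [mul_comm] using h'
  have hm : Measurable fun z : E d × E d => a z.2 ^ p * b (z.1 - z.2) :=
    ((ha.comp measurable_snd).pow_const _).mul (hb.comp (measurable_fst.sub measurable_snd))
  calc ∫⁻ x, (∫⁻ y, a y * b (x - y)) ^ p
      ≤ ∫⁻ x, (∫⁻ y, b y) ^ (p - 1) * ∫⁻ y, a y ^ p * b (x - y) := lintegral_mono key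
    _ = (∫⁻ y, b y) ^ (p - 1) * ∫⁻ x, ∫⁻ y, a y ^ p * b (x - y) :=
        lintegral_const_mul _ hm.lintegral_prod_right'
    _ = (∫⁻ y, b y) ^ (p - 1) * ∫⁻ y, a y ^ p * ∫⁻ x, b x := by
        rw [lintegral_lintegral_swap hm.aemeasurable]
        congr 1
        refine lintegral_congr fun y => ?_
        rw [lintegral_const_mul _ (by fun_prop : Measurable fun x => b (x - y)),
          lintegral_sub_right_eq_self b y]
    _ = (∫⁻ y, b y) ^ p * ∫⁻ y, a y ^ p := by
        rw [lintegral_mul_const _ (ha.pow_const _), mul_left_comm, mul_comm]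
        congr 1
        nth_rw 2 [← ENNReal.rpow_one (∫⁻ y, b y)]
        rw [← ENNReal.rpow_add_of_nonneg _ _ (by linarith) zero_le_one, sub_add_cancel]

theorem lintegral_exp_gammaMeasure {a : ℝ} (ha : 0 < a) {s : ℝ} (hs : 0 ≤ s) :
    ∫⁻ t, ENNReal.ofReal (Real.exp (-(t * s))) ∂ProbabilityTheory.gammaMeasure a 1
      = ENNReal.ofReal ((1 + s) ^ (-a)) := by
  rw [ProbabilityTheory.gammaMeasure, lintegral_withDensity_eq_lintegral_mul _
    (by unfold ProbabilityTheory.gammaPDF; fun_prop) (by fun_prop)]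
  rw [← mul_one (ENNReal.ofReal ((1 + s) ^ (-a))), ← ProbabilityTheory.lintegral_gammaPDF_eq_one ha
    (by linarith : 0 < 1 + s), ← lintegral_const_mul' _ _ ENNReal.ofReal_ne_top]
  refine lintegral_congr fun t => ?_
  rcases lt_or_ge t 0 with ht | ht
  · simp [ProbabilityTheory.gammaPDF_of_neg ht]
  · rw [Pi.mul_apply, ProbabilityTheory.gammaPDF_of_nonneg ht, ProbabilityTheory.gammaPDF_of_nonneg ht,
      ← ENNReal.ofReal_mul, ← ENNReal.ofReal_mul (by positivity)]
    · congr 1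
      rw [mul_assoc, ← Real.exp_add, Real.one_rpow, Real.rpow_neg (by linarith)]
      have : (1 + s) ^ a ≠ 0 := (Real.rpow_pos_of_pos (by linarith) _).ne'
      field_simp
      congr 1
      ring_nf
    · have := Real.Gamma_pos_of_pos ha
      positivity

/-- The Bessel weight is a superposition of Gaussians, stable under `t ↦ t / (2t + 1)`. -/
theorem exists_measure_exp {a : ℝ} (ha : 0 ≤ a) :
    ∃ ν : Measure ℝ, IsProbabilityMeasure ν ∧ (∀ᵐ t ∂ν, 0 ≤ t) ∧
      (∀ s, 0 ≤ s → ∫⁻ t, ENNReal.ofReal (Real.exp (-(t * s))) ∂ν = ENNReal.ofReal ((1 + s) ^ (-a))) ∧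
      ∃ c : ℝ, 0 ≤ c ∧ ∀ s, 0 ≤ s → ∫⁻ t, ENNReal.ofReal (Real.exp (-(t / (2 * t + 1) * s))) ∂ν ≤
        ENNReal.ofReal (c * (1 + s) ^ (-a)) := by
  rcases ha.eq_or_lt with rfl | ha
  · refine ⟨Measure.dirac 0, inferInstance, ?_, ?_, 1, zero_le_one, ?_⟩
    · rw [ae_dirac_eq]; simp
    · intro s hs; simp
    · intro s hs; simp
  have hprob := ProbabilityTheory.isProbabilityMeasure_gammaMeasure ha one_pos
  have hae : ∀ᵐ t ∂ProbabilityTheory.gammaMeasure a 1, 0 ≤ t := by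
    rw [ae_iff]
    simp only [not_le]
    rw [show {t : ℝ | t < 0} = Set.Iio 0 from rfl, ProbabilityTheory.gammaMeasure,
      withDensity_apply _ measurableSet_Iio]
    exact ProbabilityTheory.lintegral_gammaPDF_of_nonpos le_rfl
  refine ⟨ProbabilityTheory.gammaMeasure a 1, hprob, hae,
    fun s hs => lintegral_exp_gammaMeasure ha hs,
    3 ^ a + (3 * a) ^ a * Real.exp (1 / 3), by positivity, fun s hs => ?_⟩
  have h1 : ∀ᵐ t ∂ProbabilityTheory.gammaMeasure a 1,
      ENNReal.ofReal (Real.exp (-(t / (2 * t + 1) * s))) ≤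
        ENNReal.ofReal (Real.exp (-(t * (s / 3)))) + ENNReal.ofReal (Real.exp (-(s / 3))) := by
    filter_upwards [hae] with t ht
    rcases le_total t 1 with h | h
    · refine le_add_right (ENNReal.ofReal_le_ofReal (Real.exp_le_exp.2 (neg_le_neg ?_)))
      rw [div_mul_eq_mul_div, ← mul_div_assoc]
      exact div_le_div_of_nonneg_left (by positivity) (by positivity) (by linarith)
    · refine le_add_left (ENNReal.ofReal_le_ofReal (Real.exp_le_exp.2 (neg_le_neg ?_)))
      rw [div_mul_eq_mul_div, div_le_div_iff₀ (by positivity) (by positivity)]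
      nlinarith
  refine (lintegral_mono_ae h1).trans ?_
  rw [lintegral_add_left (by fun_prop), lintegral_exp_gammaMeasure ha (by positivity),
    lintegral_const, measure_univ, mul_one, ← ENNReal.ofReal_add (by positivity) (by positivity)]
  apply ENNReal.ofReal_le_ofReal
  have hs1 : 0 < (1 + s) ^ a := Real.rpow_pos_of_pos (by linarith) _
  rw [add_mul]
  refine add_le_add ?_ ?_
  · rw [Real.rpow_neg (by positivity), Real.rpow_neg (by positivity), ← div_eq_mul_inv,
      ← Real.div_rpow (by norm_num) (by positivity), ← Real.inv_rpow (by positivity)]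
    apply Real.rpow_le_rpow (by positivity) _ ha.le
    rw [inv_eq_one_div, div_le_div_iff₀ (by positivity) (by positivity)]
    linarith
  · rw [Real.rpow_neg (by positivity), ← div_eq_mul_inv, le_div_iff₀ hs1]
    have h2 : (1 + s) / (3 * a) ≤ Real.exp ((1 + s) / (3 * a)) :=
      (le_add_of_nonneg_right zero_le_one).trans (Real.add_one_le_exp _)
    have h3 := Real.rpow_le_rpow (by positivity) h2 ha.le
    rw [Real.div_rpow (by positivity) (by positivity), ← Real.exp_mul,
      div_le_iff₀ (by positivity)] at h3
    calc Real.exp (-(s / 3)) * (1 + s) ^ a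
        ≤ Real.exp (-(s / 3)) * (Real.exp ((1 + s) / (3 * a) * a) * (3 * a) ^ a) := by gcongr
      _ = (3 * a) ^ a * Real.exp (1 / 3) := by
        rw [← mul_assoc, ← Real.exp_add, mul_comm]
        congr 2
        field_simp
        ring

/-- The Gaussian `exp(-b|v|²)`. -/
def gauss (d : ℕ) (b : ℝ) (v : E d) : ℂ := (Real.exp (-b * ‖v‖ ^ 2) : ℂ)

theorem gauss_sub_comm (d : ℕ) (b : ℝ) (v w : E d) : gauss d b (v - w) = gauss d b (w - v) := by
  rw [gauss, norm_sub_rev, gauss]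

theorem continuous_gauss (d : ℕ) (b : ℝ) : Continuous (gauss d b) := by
  unfold gauss; fun_prop

theorem norm_gauss (d : ℕ) (b : ℝ) (v : E d) : ‖gauss d b v‖ = Real.exp (-b * ‖v‖ ^ 2) := by
  rw [gauss, Complex.norm_real, Real.norm_eq_abs, abs_of_pos (Real.exp_pos _)]

theorem norm_gauss_le_one (d : ℕ) {b : ℝ} (hb : 0 ≤ b) (v : E d) : ‖gauss d b v‖ ≤ 1 := by
  rw [norm_gauss, Real.exp_le_one_iff]
  nlinarith [mul_nonneg hb (sq_nonneg ‖v‖)]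

theorem integrable_gauss (d : ℕ) {b : ℝ} (hb : 0 < b) : Integrable (gauss d b) := by
  have h := GaussianFourier.integrable_cexp_neg_mul_sq_norm_add (V := E d) (b := (b : ℂ))
    (by simpa using hb) 0 0
  refine h.congr (Filter.Eventually.of_forall fun v => ?_)
  simp [gauss]

theorem osc_gauss (d : ℕ) {b : ℝ} (hb : 0 < b) (y : E d) :
    osc d (gauss d b) y = ((π / b) ^ ((d : ℝ) / 2) : ℝ) * gauss d (1 / (4 * b)) y := by
  have h := GaussianFourier.integral_cexp_neg_mul_sq_norm_add (V := E d) (b := (b : ℂ))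
    (by simpa using hb) I y
  have e : osc d (gauss d b) y = ∫ v : E d, cexp (-(b : ℂ) * ‖v‖ ^ 2 + I * (⟪y, v⟫ : ℝ)) := by
    rw [osc]
    congr 1 with v
    rw [gauss, Complex.ofReal_exp, ← Complex.exp_add]
    push_cast
    ring_nf
  rw [e, h]
  congr 1
  · rw [Complex.ofReal_cpow (by positivity)]
    simp
  · rw [gauss, Complex.ofReal_exp]
    congr 1
    rw [I_sq]
    push_cast
    field_simp

theorem osc_translate (d : ℕ) (w : E d → ℂ) (c y : E d) :
    osc d (fun ξ => w (ξ - c)) y = Complex.exp (I * (⟪y, c⟫ : ℝ)) * osc d w y := by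
  rw [osc, osc, ← integral_const_mul, ← integral_sub_right_eq_self
    (fun ξ => Complex.exp (I * (⟪y, c⟫ : ℝ)) * (Complex.exp (I * (⟪y, ξ⟫ : ℝ)) * w ξ)) c]
  congr 1 with ξ
  rw [← mul_assoc, ← Complex.exp_add, inner_sub_right]
  push_cast
  ring_nf

theorem lintegral_enorm_gauss (d : ℕ) {b : ℝ} (hb : 0 < b) :
    ∫⁻ v, ‖gauss d b v‖ₑ = ENNReal.ofReal ((π / b) ^ ((d : ℝ) / 2)) := by
  rw [← ofReal_integral_norm_eq_lintegral_enorm (integrable_gauss d hb)]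
  simp_rw [norm_gauss]
  rw [GaussianFourier.integral_rexp_neg_mul_sq_norm hb]
  simp

theorem integrable_convolution_prod (d : ℕ) {G g : E d → ℂ} (hG : Integrable G) (hg : Integrable g) :
    Integrable (fun z : E d × E d => G z.2 * g (z.1 - z.2)) (volume.prod volume) := by
  simpa using hG.convolution_integrand (ContinuousLinearMap.mul ℝ ℂ) hg

theorem osc_convolution (d : ℕ) {G g : E d → ℂ} (hG : Integrable G) (hg : Integrable g) (y : E d) :
    osc d (fun ξ => ∫ η, G η * g (ξ - η)) y = osc d G y * osc d g y := by
  have hintg : Integrable (fun z : E d × E d =>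
      Complex.exp (I * (⟪y, z.1⟫ : ℝ)) * (G z.2 * g (z.1 - z.2))) (volume.prod volume) := by
    refine (integrable_convolution_prod d hG hg).bdd_mul (c := 1) ?_ ?_
    · exact Continuous.aestronglyMeasurable (by fun_prop)
    · exact Filter.Eventually.of_forall fun ξ => (norm_cexp_I_mul_ofReal _).le
  calc osc d (fun ξ => ∫ η, G η * g (ξ - η)) y
      = ∫ ξ, ∫ η, Complex.exp (I * (⟪y, ξ⟫ : ℝ)) * (G η * g (ξ - η)) := by
        simp_rw [osc, integral_const_mul]
    _ = ∫ η, ∫ ξ, Complex.exp (I * (⟪y, ξ⟫ : ℝ)) * (G η * g (ξ - η)) :=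
        integral_integral_swap hintg
    _ = ∫ η, Complex.exp (I * (⟪y, η⟫ : ℝ)) * G η * osc d g y := by
        congr 1 with η
        rw [mul_comm (Complex.exp _) (G η), mul_assoc, ← osc_translate, osc, ← integral_const_mul]
        congr 1 with ξ
        ring
    _ = osc d G y * osc d g y := integral_mul_const _ _

theorem osc_cexp_mul (d : ℕ) (G : E d → ℂ) (x y : E d) :
    osc d (fun η => Complex.exp (I * (⟪x, η⟫ : ℝ)) * G η) y = osc d G (x + y) := by
  rw [osc, osc]
  congr 1 with η
  rw [← mul_assoc, ← Complex.exp_add, inner_add_left]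
  push_cast
  ring_nf

/-- The multiplier `(1+|η|²)^{-a}`. -/
def besselWeight (d : ℕ) (a : ℝ) (η : E d) : ℂ := ((1 + ‖η‖ ^ 2) ^ (-a) : ℝ)

theorem continuous_besselWeight (d : ℕ) (a : ℝ) : Continuous (besselWeight d a) := by
  unfold besselWeight
  refine Complex.continuous_ofReal.comp (Continuous.rpow_const (by fun_prop) fun η => Or.inl ?_)
  positivity

theorem norm_besselWeight (d : ℕ) (a : ℝ) (η : E d) :
    ‖besselWeight d a η‖ = (1 + ‖η‖ ^ 2) ^ (-a) := by
  rw [besselWeight, Complex.norm_real, Real.norm_eq_abs, abs_of_nonneg (by positivity)]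

theorem norm_besselWeight_le_one (d : ℕ) {a : ℝ} (ha : 0 ≤ a) (η : E d) :
    ‖besselWeight d a η‖ ≤ 1 := by
  rw [norm_besselWeight]
  exact Real.rpow_le_one_of_one_le_of_nonpos (by nlinarith [sq_nonneg ‖η‖]) (by linarith)

theorem gauss_mul_gauss (d : ℕ) {t : ℝ} (ht : 0 ≤ t) (ξ η : E d) :
    gauss d t η * gauss d (1 / 2) (ξ - η) = (Real.exp (-(t / (2 * t + 1) * ‖ξ‖ ^ 2)) : ℂ) *
      gauss d (t + 1 / 2) (η - (2 * t + 1)⁻¹ • ξ) := by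
  simp only [gauss]
  rw [← Complex.ofReal_mul, ← Complex.ofReal_mul, ← Real.exp_add, ← Real.exp_add,
    norm_sub_sq_real, norm_sub_sq_real, norm_smul, inner_smul_right, real_inner_comm,
    Real.norm_eq_abs, abs_of_nonneg (by positivity)]
  congr 2
  field_simp
  ring

theorem lintegral_osc_besselWeight_gauss_le (d : ℕ) {a : ℝ} (ha : 0 ≤ a) :
    ∃ c : ℝ, 0 ≤ c ∧ ∀ ξ : E d,
      ∫⁻ s, ‖osc d (fun η => besselWeight d a η * gauss d (1 / 2) (ξ - η)) s‖ₑ ≤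
        ENNReal.ofReal (c * (1 + ‖ξ‖ ^ 2) ^ (-a)) := by
  obtain ⟨ν, hν, hν0, h1, c, hc, h2⟩ := exists_measure_exp ha
  refine ⟨(2 * π) ^ d * c, by positivity, fun ξ => ?_⟩
  have hgm : Continuous fun z : E d × ℝ => gauss d z.2 z.1 := by unfold gauss; fun_prop
  have hw : ∀ η, besselWeight d a η = ∫ t, gauss d t η ∂ν := by
    intro η
    have e : ∫ t, Real.exp (-(t * ‖η‖ ^ 2)) ∂ν = (1 + ‖η‖ ^ 2) ^ (-a) := by
      rw [integral_eq_lintegral_of_nonneg_ae (Filter.Eventually.of_forall fun t => (Real.exp_pos _).le)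
        (Continuous.aestronglyMeasurable (by fun_prop)), h1 _ (by positivity),
        ENNReal.toReal_ofReal (by positivity)]
    rw [besselWeight, ← e, ← integral_complex_ofReal]
    simp_rw [gauss, neg_mul]
  have hintg : ∀ s, Integrable (fun z : E d × ℝ => Complex.exp (I * (⟪s, z.1⟫ : ℝ)) *
      (gauss d z.2 z.1 * gauss d (1 / 2) (ξ - z.1))) (volume.prod ν) := by
    intro s
    have hb : Integrable (fun z : E d × ℝ => gauss d (1 / 2) (ξ - z.1) * 1) (volume.prod ν) :=
      ((integrable_gauss d (by norm_num : (0 : ℝ) < 1 / 2)).comp_sub_left ξ).mul_prod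
        (integrable_const (1 : ℂ))
    have hz : ∀ᵐ z ∂((volume : Measure (E d)).prod ν), 0 ≤ z.2 :=
      Measure.quasiMeasurePreserving_snd.ae hν0
    have hc1 : Continuous fun z : E d × ℝ => gauss d (1 / 2) (ξ - z.1) :=
      (continuous_gauss d _).comp (by fun_prop)
    refine hb.mono (Continuous.aestronglyMeasurable ?_) ?_
    · exact Continuous.mul (by fun_prop) (hgm.mul hc1)
    · filter_upwards [hz] with z hz
      rw [norm_mul, norm_mul, norm_cexp_I_mul_ofReal, mul_one, one_mul]
      exact mul_le_of_le_one_left (norm_nonneg _) (norm_gauss_le_one d hz _)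
  have hosc : ∀ s, osc d (fun η => besselWeight d a η * gauss d (1 / 2) (ξ - η)) s
      = ∫ t, osc d (fun η => gauss d t η * gauss d (1 / 2) (ξ - η)) s ∂ν := by
    intro s
    have e := integral_integral_swap (f := fun η t => Complex.exp (I * (⟪s, η⟫ : ℝ)) *
      (gauss d t η * gauss d (1 / 2) (ξ - η))) (hintg s)
    simp only [osc]
    rw [← e]
    congr 1 with η
    rw [hw, ← integral_mul_const, ← integral_const_mul]
  set J : E d → ℝ → ℝ≥0∞ := fun s t => ENNReal.ofReal (Real.exp (-(t / (2 * t + 1) * ‖ξ‖ ^ 2))) *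
    (ENNReal.ofReal ((π / (t + 1 / 2)) ^ ((d : ℝ) / 2)) * ‖gauss d (1 / (4 * (t + 1 / 2))) s‖ₑ) with hJ
  have hJm : Measurable (Function.uncurry J) := by
    simp only [hJ, Function.uncurry_def, gauss]
    fun_prop
  have hle : ∀ s, ‖osc d (fun η => besselWeight d a η * gauss d (1 / 2) (ξ - η)) s‖ₑ
      ≤ ∫⁻ t, J s t ∂ν := by
    intro s
    rw [hosc]
    refine (enorm_integral_le_lintegral_enorm _).trans (lintegral_mono_ae ?_)
    filter_upwards [hν0] with t ht
    have e : osc d (fun η => gauss d t η * gauss d (1 / 2) (ξ - η)) s =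
        (Real.exp (-(t / (2 * t + 1) * ‖ξ‖ ^ 2)) : ℂ) *
          (Complex.exp (I * (⟪s, (2 * t + 1)⁻¹ • ξ⟫ : ℝ)) * osc d (gauss d (t + 1 / 2)) s) := by
      rw [← osc_translate, osc, osc, ← integral_const_mul]
      congr 1 with η
      rw [gauss_mul_gauss d ht]
      ring
    rw [e, osc_gauss d (by positivity), enorm_mul, enorm_mul, enorm_mul, enorm_cexp_I_mul_ofReal,
      one_mul]
    apply le_of_eq
    rw [hJ]
    congr 2
    · rw [← ofReal_norm, Complex.norm_real, Real.norm_eq_abs, abs_of_pos (Real.exp_pos _)]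
    · rw [← ofReal_norm, Complex.norm_real, Real.norm_eq_abs, abs_of_nonneg (by positivity)]
  calc ∫⁻ s, ‖osc d (fun η => besselWeight d a η * gauss d (1 / 2) (ξ - η)) s‖ₑ
      ≤ ∫⁻ s, ∫⁻ t, J s t ∂ν := lintegral_mono hle
    _ = ∫⁻ t, (∫⁻ s, J s t) ∂ν := lintegral_lintegral_swap hJm.aemeasurable
    _ = ∫⁻ t, ENNReal.ofReal ((2 * π) ^ d) *
          ENNReal.ofReal (Real.exp (-(t / (2 * t + 1) * ‖ξ‖ ^ 2))) ∂ν := by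
        apply lintegral_congr_ae
        filter_upwards [hν0] with t ht
        simp only [hJ]
        rw [lintegral_const_mul' _ _ ENNReal.ofReal_ne_top,
          lintegral_const_mul' _ _ ENNReal.ofReal_ne_top, lintegral_enorm_gauss d (by positivity),
          mul_comm, ← ENNReal.ofReal_mul (by positivity),
          ← Real.mul_rpow (by positivity) (by positivity)]
        congr 2
        rw [show π / (t + 1 / 2) * (π / (1 / (4 * (t + 1 / 2)))) = (2 * π) ^ (2 : ℝ) by
          rw [Real.rpow_two]; field_simp; ring, ← Real.rpow_mul (by positivity),
          mul_div_cancel₀ _ two_ne_zero, Real.rpow_natCast]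
    _ ≤ _ := by
        rw [lintegral_const_mul' _ _ ENNReal.ofReal_ne_top, mul_assoc,
          ENNReal.ofReal_mul (p := (2 * π) ^ d) (by positivity)]
        exact mul_le_mul' le_rfl (h2 _ (by positivity))

theorem memLp_two_of_integrable_of_bounded {d : ℕ} {w : E d → ℂ} (h : Integrable w) {M : ℝ}
    (hM : ∀ x, ‖w x‖ ≤ M) : MemLp w 2 := by
  rw [memLp_two_iff_integrable_sq_norm h.1]
  simp_rw [sq]
  exact h.norm.bdd_mul (c := M) h.1.norm (Filter.Eventually.of_forall fun x => by simpa using hM x)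

theorem FT_eq_osc (d : ℕ) (f : E d → ℂ) (ξ : E d) : FT d f ξ = osc d f (-ξ) := by
  rw [FT, osc]
  congr 1 with x
  rw [inner_neg_left, real_inner_comm]
  push_cast
  ring_nf

theorem stft_eq_convolution (d : ℕ) (f : E d → ℂ) (y ξ : E d) :
    stft d f (y, ξ) =
      ∫ z, Complex.exp (I * (⟪-ξ, z⟫ : ℝ)) * f z * gauss d (1 / 2) (y - z) := by
  rw [stft]
  congr 1 with z
  rw [pkbar, gauss_sub_comm, gauss, inner_neg_left, real_inner_comm]
  push_cast
  ring_nf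

theorem stft_eq_osc (d : ℕ) (f : E d → ℂ) (y ξ : E d) :
    stft d f (y, ξ) = osc d (fun z => f z * gauss d (1 / 2) (y - z)) (-ξ) := by
  rw [stft_eq_convolution, osc]
  congr 1 with z
  ring

theorem integrable_convolution_gauss {d : ℕ} {G : E d → ℂ} (hG : Integrable G) {b : ℝ} (hb : 0 < b) :
    Integrable fun y => ∫ z, G z * gauss d b (y - z) :=
  (integrable_convolution_prod d hG (integrable_gauss d hb)).integral_prod_left

theorem integrable_stft {d : ℕ} {f : E d → ℂ} (hf : Integrable f) (ξ : E d) :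
    Integrable fun y => stft d f (y, ξ) := by
  simp_rw [stft_eq_convolution]
  exact integrable_convolution_gauss (integrable_cexp_mul d hf _) (by norm_num)

theorem osc_stft (d : ℕ) {f : E d → ℂ} (hf : Integrable f) (ξ η : E d) :
    osc d (fun y => stft d f (y, ξ)) (ξ - η) =
      ((2 * π) ^ ((d : ℝ) / 2) : ℝ) * (gauss d (1 / 2) (ξ - η) * FT d f η) := by
  simp_rw [stft_eq_convolution]
  rw [osc_convolution d (integrable_cexp_mul d hf _) (integrable_gauss d (by norm_num)),
    osc_cexp_mul, osc_gauss d (by norm_num), FT_eq_osc]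
  rw [show -ξ + (ξ - η) = -η by abel, show (1 : ℝ) / (4 * (1 / 2)) = 1 / 2 by norm_num,
    show π / (1 / 2) = 2 * π by ring]
  ring

theorem osc_mul_osc (d : ℕ) {W V : E d → ℂ} (hW : Integrable W) (hV : Integrable V) (ξ x : E d) :
    osc d (fun η => W η * osc d V (ξ - η)) x =
      ∫ y, Complex.exp (I * (⟪y, ξ⟫ : ℝ)) * V y * osc d W (x - y) := by
  have hintg : Integrable (fun z : E d × E d => Complex.exp (I * (⟪x, z.1⟫ : ℝ)) *
      (Complex.exp (I * (⟪ξ - z.1, z.2⟫ : ℝ)) * (W z.1 * V z.2))) (volume.prod volume) := by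
    refine Integrable.bdd_mul (c := 1) (Integrable.bdd_mul (c := 1) (hW.mul_prod hV) ?_ ?_) ?_ ?_
    · exact Continuous.aestronglyMeasurable (by fun_prop)
    · exact Filter.Eventually.of_forall fun ξ => (norm_cexp_I_mul_ofReal _).le
    · exact Continuous.aestronglyMeasurable (by fun_prop)
    · exact Filter.Eventually.of_forall fun ξ => (norm_cexp_I_mul_ofReal _).le
  have e := integral_integral_swap (f := fun η y => Complex.exp (I * (⟪x, η⟫ : ℝ)) *
      (Complex.exp (I * (⟪ξ - η, y⟫ : ℝ)) * (W η * V y))) hintg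
  calc osc d (fun η => W η * osc d V (ξ - η)) x
      = ∫ η, ∫ y, Complex.exp (I * (⟪x, η⟫ : ℝ)) *
          (Complex.exp (I * (⟪ξ - η, y⟫ : ℝ)) * (W η * V y)) := by
        simp only [osc]
        congr 1 with η
        rw [← integral_const_mul, ← integral_const_mul]
        congr 1 with y
        ring
    _ = _ := by
        rw [e]
        simp only [osc]
        congr 1 with y
        rw [← integral_const_mul]
        congr 1 with η
        have : Complex.exp (I * (⟪x, η⟫ : ℝ)) * Complex.exp (I * (⟪ξ - η, y⟫ : ℝ)) =
            Complex.exp (I * (⟪y, ξ⟫ : ℝ)) * Complex.exp (I * (⟪x - y, η⟫ : ℝ)) := by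
          rw [← Complex.exp_add, ← Complex.exp_add, inner_sub_left, inner_sub_left,
            real_inner_comm y ξ, real_inner_comm y η]
          push_cast
          ring_nf
        linear_combination (W η * V y) * this

/-- Gaussian localization at frequency `ξ` of the function with Fourier transform `G`. -/
def freqLocal (d : ℕ) (G : E d → ℂ) (x ξ : E d) : ℂ := osc d (fun η => G η * gauss d 1 (ξ - η)) x

theorem freqLocal_eq_convolution (d : ℕ) (G : E d → ℂ) (x ξ : E d) :
    freqLocal d G x ξ = ∫ η, Complex.exp (I * (⟪x, η⟫ : ℝ)) * G η * gauss d 1 (ξ - η) := by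
  rw [freqLocal, osc]
  congr 1 with η
  ring

theorem norm_freqLocal_le (d : ℕ) {G : E d → ℂ} (hG : Integrable G) (x ξ : E d) :
    ‖freqLocal d G x ξ‖ ≤ ∫ η, ‖G η‖ := by
  rw [freqLocal_eq_convolution]
  refine norm_integral_le_of_norm_le hG.norm (Filter.Eventually.of_forall fun η => ?_)
  rw [norm_mul, norm_mul, norm_cexp_I_mul_ofReal, one_mul]
  exact mul_le_of_le_one_right (norm_nonneg _) (norm_gauss_le_one d zero_le_one _)

theorem measurable_freqLocal (d : ℕ) {G : E d → ℂ} (hG : Continuous G) :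
    Measurable fun z : E d × E d => freqLocal d G z.1 z.2 := by
  have hc : Continuous fun z : (E d × E d) × E d =>
      Complex.exp (I * (⟪z.1.1, z.2⟫ : ℝ)) * (G z.2 * gauss d 1 (z.1.2 - z.2)) := by
    have := (continuous_gauss d 1).comp (by fun_prop : Continuous fun z : (E d × E d) × E d => z.1.2 - z.2)
    exact Continuous.mul (by fun_prop) (Continuous.mul (by fun_prop) this)
  exact hc.stronglyMeasurable.integral_prod_right.measurable

theorem measurable_stft (d : ℕ) {f : E d → ℂ} (hf : Continuous f) : Measurable (stft d f) := by
  have hc : Continuous fun z : P d × E d => f z.2 * pkbar d z.1 z.2 := by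
    unfold pkbar
    fun_prop
  exact hc.stronglyMeasurable.integral_prod_right.measurable

theorem osc_freqLocal (d : ℕ) {G : E d → ℂ} (hG : Integrable G) (x y : E d) :
    osc d (freqLocal d G x) y =
      osc d G (x + y) * ((π ^ ((d : ℝ) / 2) : ℝ) * gauss d (1 / 4) y) := by
  have e : freqLocal d G x = fun ξ => ∫ η, Complex.exp (I * (⟪x, η⟫ : ℝ)) * G η * gauss d 1 (ξ - η) :=
    funext (freqLocal_eq_convolution d G x)
  rw [e, osc_convolution d (integrable_cexp_mul d hG _) (integrable_gauss d one_pos),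
    osc_cexp_mul, osc_gauss d one_pos]
  norm_num

theorem one_le_enorm_ofReal {r : ℝ} (hr : 1 ≤ r) : 1 ≤ ‖(r : ℂ)‖ₑ := by
  rw [← ofReal_norm, Complex.norm_real, Real.norm_eq_abs, abs_of_nonneg (by linarith)]
  exact ENNReal.one_le_ofReal.2 hr

theorem enorm_gauss_rpow (d : ℕ) (b : ℝ) {p : ℝ} (hp : 0 ≤ p) (y : E d) :
    ‖gauss d b y‖ₑ ^ p = ‖gauss d (b * p) y‖ₑ := by
  rw [← ofReal_norm, ← ofReal_norm, norm_gauss, norm_gauss,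
    ENNReal.ofReal_rpow_of_nonneg (Real.exp_pos _).le hp, ← Real.exp_mul]
  ring_nf

/-- Recovering `‖u‖_p` from the frequency localizations of `u`. -/
theorem lintegral_osc_rpow_le_freqLocal (d : ℕ) (hd : 1 ≤ d) {p : ℝ} (hp : 2 ≤ p) :
    ∃ c : ℝ≥0∞, c ≠ ⊤ ∧ ∀ G : E d → ℂ, Continuous G → Integrable G →
      ∫⁻ y, ‖osc d G y‖ₑ ^ p ≤
        c * ∫⁻ x, ∫⁻ ξ, ‖freqLocal d G x ξ‖ₑ ^ p * ‖ξ‖ₑ ^ (d * (p - 2)) := by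
  obtain ⟨c, hc, h⟩ := lintegral_osc_rpow_le_weighted d hd hp
  have hp0 : 0 < p := by linarith
  set g := ENNReal.ofReal ((π / (1 / 4 * p)) ^ ((d : ℝ) / 2)) with hg
  have hg0 : g ≠ 0 := by
    rw [hg, Ne, ENNReal.ofReal_eq_zero, not_le]
    exact Real.rpow_pos_of_pos (by positivity) _
  refine ⟨g⁻¹ * c, ENNReal.mul_ne_top (ENNReal.inv_ne_top.2 hg0) hc, fun G hGc hG => ?_⟩
  have hmo : Measurable (osc d G) := (continuous_osc d hG).measurable
  have hmg : ∀ b, Measurable (gauss d b) := fun b => (continuous_gauss d b).measurable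
  have hx : ∀ x, ∫⁻ y, ‖osc d G (x + y)‖ₑ ^ p * ‖gauss d (1 / 4 * p) y‖ₑ ≤
      c * ∫⁻ ξ, ‖freqLocal d G x ξ‖ₑ ^ p * ‖ξ‖ₑ ^ (d * (p - 2)) := by
    intro x
    have hintg : Integrable (freqLocal d G x) := by
      have e : freqLocal d G x =
          fun ξ => ∫ η, Complex.exp (I * (⟪x, η⟫ : ℝ)) * G η * gauss d 1 (ξ - η) :=
        funext (freqLocal_eq_convolution d G x)
      rw [e]
      exact integrable_convolution_gauss (integrable_cexp_mul d hG _) one_pos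
    have hm : Measurable (freqLocal d G x) :=
      Measurable.of_uncurry_left (f := freqLocal d G) (measurable_freqLocal d hGc)
    have h₂ : MemLp (freqLocal d G x) 2 :=
      memLp_two_of_integrable_of_bounded hintg (norm_freqLocal_le d hG x)
    refine le_trans (lintegral_mono fun y => ?_) (h (freqLocal d G x) hm hintg h₂)
    rw [osc_freqLocal d hG, enorm_mul, ENNReal.mul_rpow_of_nonneg _ _ hp0.le,
      ← enorm_gauss_rpow d _ hp0.le]
    gcongr
    rw [enorm_mul]
    exact le_mul_of_one_le_left' (one_le_enorm_ofReal
      (Real.one_le_rpow (by linarith [Real.pi_gt_three]) (by positivity)))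
  have hm2 : Measurable fun z : E d × E d => ‖osc d G (z.1 + z.2)‖ₑ ^ p * ‖gauss d (1 / 4 * p) z.2‖ₑ :=
    ((hmo.comp (measurable_fst.add measurable_snd)).enorm.pow_const _).mul
      ((hmg _).comp measurable_snd).enorm
  have key : g * ∫⁻ y, ‖osc d G y‖ₑ ^ p ≤
      c * ∫⁻ x, ∫⁻ ξ, ‖freqLocal d G x ξ‖ₑ ^ p * ‖ξ‖ₑ ^ (d * (p - 2)) := by
    calc g * ∫⁻ y, ‖osc d G y‖ₑ ^ p
        = ∫⁻ y, (∫⁻ x, ‖osc d G x‖ₑ ^ p) * ‖gauss d (1 / 4 * p) y‖ₑ := by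
          rw [lintegral_const_mul _ (hmg _).enorm, lintegral_enorm_gauss d (by positivity), mul_comm]
      _ = ∫⁻ y, ∫⁻ x, ‖osc d G (x + y)‖ₑ ^ p * ‖gauss d (1 / 4 * p) y‖ₑ := by
          refine lintegral_congr fun y => ?_
          rw [lintegral_mul_const _ (by fun_prop),
            lintegral_add_right_eq_self (fun x => ‖osc d G x‖ₑ ^ p) y]
      _ = ∫⁻ x, ∫⁻ y, ‖osc d G (x + y)‖ₑ ^ p * ‖gauss d (1 / 4 * p) y‖ₑ :=
          (lintegral_lintegral_swap hm2.aemeasurable).symm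
      _ ≤ ∫⁻ x, c * ∫⁻ ξ, ‖freqLocal d G x ξ‖ₑ ^ p * ‖ξ‖ₑ ^ (d * (p - 2)) := lintegral_mono hx
      _ = _ := lintegral_const_mul' _ _ hc
  rw [mul_assoc, mul_comm g⁻¹, ← div_eq_mul_inv, ENNReal.le_div_iff_mul_le (Or.inl hg0)
    (Or.inl ENNReal.ofReal_ne_top), mul_comm]
  exact key

theorem integrable_besselWeight_mul_gauss (d : ℕ) {a : ℝ} (ha : 0 ≤ a) (ξ : E d) :
    Integrable fun η => besselWeight d a η * gauss d (1 / 2) (ξ - η) :=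
  ((integrable_gauss d (by norm_num : (0 : ℝ) < 1 / 2)).comp_sub_left ξ).bdd_mul (c := 1)
    (continuous_besselWeight d a).aestronglyMeasurable
    (Filter.Eventually.of_forall fun η => norm_besselWeight_le_one d ha η)

theorem enorm_freqLocal_le (d : ℕ) {a : ℝ} (ha : 0 ≤ a) {f : E d → ℂ} (hf : Integrable f) (x ξ : E d) :
    ‖freqLocal d (fun η => besselWeight d a η * FT d f η) x ξ‖ₑ ≤
      ∫⁻ y, ‖stft d f (y, ξ)‖ₑ *
        ‖osc d (fun η => besselWeight d a η * gauss d (1 / 2) (ξ - η)) (x - y)‖ₑ := by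
  have h := osc_mul_osc d (integrable_besselWeight_mul_gauss d ha ξ) (integrable_stft hf ξ) ξ x
  have e : osc d (fun η => besselWeight d a η * gauss d (1 / 2) (ξ - η) *
        osc d (fun y => stft d f (y, ξ)) (ξ - η)) x =
      ((2 * π) ^ ((d : ℝ) / 2) : ℝ) *
        freqLocal d (fun η => besselWeight d a η * FT d f η) x ξ := by
    rw [freqLocal, osc, osc, ← integral_const_mul]
    congr 1 with η
    have hg : gauss d 1 (ξ - η) = gauss d (1 / 2) (ξ - η) * gauss d (1 / 2) (ξ - η) := by
      simp only [gauss]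
      rw [← Complex.ofReal_mul, ← Real.exp_add]
      ring_nf
    rw [osc_stft d hf, hg]
    ring
  calc ‖freqLocal d (fun η => besselWeight d a η * FT d f η) x ξ‖ₑ
      ≤ ‖(((2 * π) ^ ((d : ℝ) / 2) : ℝ) : ℂ) *
          freqLocal d (fun η => besselWeight d a η * FT d f η) x ξ‖ₑ := by
        rw [enorm_mul]
        exact le_mul_of_one_le_left' (one_le_enorm_ofReal
          (Real.one_le_rpow (by linarith [Real.pi_gt_three]) (by positivity)))
    _ ≤ _ := by
        rw [← e, h]
        refine (enorm_integral_le_lintegral_enorm _).trans (le_of_eq ?_)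
        simp_rw [enorm_mul, enorm_cexp_I_mul_ofReal, one_mul]

theorem lintegral_freqLocal_rpow_le (d : ℕ) {p : ℝ} (hp : 2 ≤ p) {a : ℝ} (ha : 0 ≤ a) :
    ∃ c : ℝ, 0 ≤ c ∧ ∀ f : E d → ℂ, Continuous f → Integrable f → ∀ ξ : E d,
      ∫⁻ x, ‖freqLocal d (fun η => besselWeight d a η * FT d f η) x ξ‖ₑ ^ p ≤
        ENNReal.ofReal (c * (1 + ‖ξ‖ ^ 2) ^ (-(a * p))) * ∫⁻ y, ‖stft d f (y, ξ)‖ₑ ^ p := by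
  obtain ⟨c, hc, h⟩ := lintegral_osc_besselWeight_gauss_le d ha
  refine ⟨c ^ p, by positivity, fun f hfc hf ξ => ?_⟩
  have hp0 : 0 ≤ p := by linarith
  have hm : Measurable fun y => ‖stft d f (y, ξ)‖ₑ :=
    ((measurable_stft d hfc).comp (measurable_id.prodMk measurable_const)).enorm
  have hmo : Measurable fun s =>
      ‖osc d (fun η => besselWeight d a η * gauss d (1 / 2) (ξ - η)) s‖ₑ :=
    (continuous_osc d (integrable_besselWeight_mul_gauss d ha ξ)).measurable.enorm
  refine (lintegral_mono fun x => ENNReal.rpow_le_rpow (enorm_freqLocal_le d ha hf x ξ) hp0).trans ?_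
  refine (lintegral_convolution_rpow_le d (by linarith) hm hmo).trans ?_
  gcongr
  refine (ENNReal.rpow_le_rpow (h ξ) hp0).trans (le_of_eq ?_)
  rw [ENNReal.ofReal_rpow_of_nonneg (by positivity) hp0, Real.mul_rpow hc (by positivity),
    ← Real.rpow_mul (by positivity), neg_mul]

/-- `∫ |V_g f|^p` over phase space as an iterated integral. -/
theorem lintegral_stft_rpow (d : ℕ) (p : ℝ) {f : E d → ℂ} (hf : Continuous f) :
    ∫⁻ z : P d, ‖stft d f z‖ₑ ^ p = ∫⁻ ξ, ∫⁻ y, ‖stft d f (y, ξ)‖ₑ ^ p := by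
  rw [Measure.volume_eq_prod]
  exact lintegral_prod_symm _ ((measurable_stft d hf).enorm.pow_const _).aemeasurable

theorem lintegral_osc_besselWeight_FT_le (d : ℕ) (hd : 1 ≤ d) {p : ℝ} (hp : 2 ≤ p) {a : ℝ} (ha : 0 ≤ a)
    (hap : 2 * (a * p) = d * (p - 2)) :
    ∃ c : ℝ≥0∞, c ≠ ⊤ ∧ ∀ f : E d → ℂ, Continuous f → Integrable f →
      Continuous (FT d f) → Integrable (FT d f) →
      ∫⁻ x, ‖osc d (fun η => besselWeight d a η * FT d f η) x‖ₑ ^ p ≤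
        c * ∫⁻ z : P d, ‖stft d f z‖ₑ ^ p := by
  obtain ⟨c₁, hc₁, h₁⟩ := lintegral_osc_rpow_le_freqLocal d hd hp
  obtain ⟨c₂, hc₂, h₂⟩ := lintegral_freqLocal_rpow_le d hp ha
  refine ⟨c₁ * ENNReal.ofReal c₂, ENNReal.mul_ne_top hc₁ ENNReal.ofReal_ne_top,
    fun f hfc hf hFc hF => ?_⟩
  have hGc : Continuous fun η => besselWeight d a η * FT d f η := (continuous_besselWeight d a).mul hFc
  have hG : Integrable fun η => besselWeight d a η * FT d f η :=
    hF.bdd_mul (c := 1) (continuous_besselWeight d a).aestronglyMeasurable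
      (Filter.Eventually.of_forall fun η => norm_besselWeight_le_one d ha η)
  refine (h₁ _ hGc hG).trans ?_
  rw [mul_assoc]
  refine mul_le_mul' le_rfl ?_
  have hm := measurable_freqLocal d hGc
  have hm2 : Measurable fun z : E d × E d =>
      ‖freqLocal d (fun η => besselWeight d a η * FT d f η) z.1 z.2‖ₑ ^ p * ‖z.2‖ₑ ^ (d * (p - 2)) :=
    (hm.enorm.pow_const _).mul (measurable_snd.enorm.pow_const _)
  rw [lintegral_lintegral_swap hm2.aemeasurable, lintegral_stft_rpow d p hfc,
    ← lintegral_const_mul' _ _ ENNReal.ofReal_ne_top]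
  refine lintegral_mono fun ξ => ?_
  have hmξ : Measurable fun x => freqLocal d (fun η => besselWeight d a η * FT d f η) x ξ :=
    Measurable.of_uncurry_right (f := freqLocal d (fun η => besselWeight d a η * FT d f η)) hm
  rw [lintegral_mul_const _ (hmξ.enorm.pow_const _)]
  refine (mul_le_mul' (h₂ f hfc hf ξ) le_rfl).trans ?_
  rw [mul_right_comm]
  refine mul_le_mul' ?_ le_rfl
  have hs : 0 ≤ d * (p - 2) := mul_nonneg (Nat.cast_nonneg d) (by linarith)
  rw [← ofReal_norm, ENNReal.ofReal_rpow_of_nonneg (norm_nonneg _) hs,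
    ← ENNReal.ofReal_mul (by positivity)]
  apply ENNReal.ofReal_le_ofReal
  have hpos : 0 < (1 + ‖ξ‖ ^ 2) ^ (a * p) := Real.rpow_pos_of_pos (by positivity) _
  rw [mul_assoc]
  refine mul_le_of_le_one_right hc₂ ?_
  rw [Real.rpow_neg (by positivity), inv_mul_le_iff₀ hpos, mul_one, ← hap,
    Real.rpow_mul (norm_nonneg _), Real.rpow_two]
  exact Real.rpow_le_rpow (by positivity) (by linarith) (by linarith)

theorem norm_stft_le (d : ℕ) {f : E d → ℂ} (hf : Integrable f) (z : P d) :
    ‖stft d f z‖ ≤ ∫ y, ‖f y‖ := by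
  rw [show z = (z.1, z.2) from rfl, stft_eq_convolution]
  refine norm_integral_le_of_norm_le hf.norm (Filter.Eventually.of_forall fun η => ?_)
  rw [norm_mul, norm_mul, norm_cexp_I_mul_ofReal, one_mul]
  exact mul_le_of_le_one_right (norm_nonneg _) (norm_gauss_le_one d (by norm_num) _)

theorem lintegral_stft_sq_lt_top (d : ℕ) {f : E d → ℂ} (hfc : Continuous f) (hf : Integrable f)
    (hf2 : MemLp f 2) : ∫⁻ z : P d, ‖stft d f z‖ₑ ^ (2 : ℝ) < ⊤ := by
  have hg : ∀ y z : E d, ‖gauss d (1 / 2) (y - z)‖ ≤ 1 := fun y z =>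
    norm_gauss_le_one d (by norm_num) _
  have hgc : ∀ y : E d, Continuous fun z => gauss d (1 / 2) (y - z) := fun y =>
    (continuous_gauss d _).comp (by fun_prop)
  have h1 : ∀ y, ∫⁻ ξ, ‖stft d f (y, ξ)‖ₑ ^ (2 : ℝ) = ENNReal.ofReal ((2 * π) ^ d) *
      ∫⁻ z, ‖f z * gauss d (1 / 2) (y - z)‖ₑ ^ (2 : ℝ) := by
    intro y
    have hle : ∀ z, ‖f z * gauss d (1 / 2) (y - z)‖ ≤ ‖f z‖ := fun z => by
      rw [norm_mul]; exact mul_le_of_le_one_right (norm_nonneg _) (hg y z)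
    have hmeas : AEStronglyMeasurable fun z => f z * gauss d (1 / 2) (y - z) :=
      (hfc.mul (hgc y)).aestronglyMeasurable
    rw [← lintegral_osc_sq d (hf.mono hmeas (Filter.Eventually.of_forall hle))
      (hf2.mono hmeas (Filter.Eventually.of_forall hle))]
    simp_rw [stft_eq_osc]
    exact lintegral_neg_eq_self
      (fun ξ => ‖osc d (fun z => f z * gauss d (1 / 2) (y - z)) ξ‖ₑ ^ (2 : ℝ))
  have hm : Measurable fun z : E d × E d => ‖f z.2‖ₑ ^ (2 : ℝ) * ‖gauss d (1 / 2 * 2) (z.1 - z.2)‖ₑ := by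
    have := (continuous_gauss d (1 / 2 * 2)).measurable
    have := hfc.measurable
    fun_prop
  rw [Measure.volume_eq_prod, lintegral_prod _
    ((measurable_stft d hfc).enorm.pow_const _).aemeasurable]
  simp_rw [h1, enorm_mul, ENNReal.mul_rpow_of_nonneg _ _ zero_le_two, enorm_gauss_rpow d _ zero_le_two]
  rw [lintegral_const_mul' _ _ ENNReal.ofReal_ne_top, lintegral_lintegral_swap hm.aemeasurable]
  have h2 : ∀ z : E d, ∫⁻ y, ‖f z‖ₑ ^ (2 : ℝ) * ‖gauss d (1 / 2 * 2) (y - z)‖ₑ =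
      ‖f z‖ₑ ^ (2 : ℝ) * ENNReal.ofReal ((π / (1 / 2 * 2)) ^ ((d : ℝ) / 2)) := by
    intro z
    rw [lintegral_const_mul' _ _ (ENNReal.rpow_ne_top_of_nonneg zero_le_two enorm_ne_top),
      lintegral_sub_right_eq_self (fun y => ‖gauss d (1 / 2 * 2) y‖ₑ) z,
      lintegral_enorm_gauss d (by norm_num)]
  simp_rw [h2]
  rw [lintegral_mul_const' _ _ ENNReal.ofReal_ne_top]
  have h3 := lintegral_rpow_enorm_lt_top_of_eLpNorm_lt_top two_ne_zero ENNReal.ofNat_ne_top hf2.2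
  rw [ENNReal.toReal_ofNat] at h3
  finiteness

theorem lintegral_stft_rpow_lt_top (d : ℕ) {p : ℝ} (hp : 2 ≤ p) {f : E d → ℂ} (hfc : Continuous f)
    (hf : Integrable f) (hf2 : MemLp f 2) : ∫⁻ z : P d, ‖stft d f z‖ₑ ^ p < ⊤ := by
  have hle : ∀ z : P d, ‖stft d f z‖ₑ ^ p ≤
      ENNReal.ofReal (∫ y, ‖f y‖) ^ (p - 2) * ‖stft d f z‖ₑ ^ (2 : ℝ) := by
    intro z
    nth_rw 1 [show p = (p - 2) + 2 by ring]
    rw [ENNReal.rpow_add_of_nonneg _ _ (by linarith) zero_le_two]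
    gcongr
    rw [← ofReal_norm]
    exact ENNReal.ofReal_le_ofReal (norm_stft_le d hf z)
  refine (lintegral_mono hle).trans_lt ?_
  rw [lintegral_const_mul' _ _ (ENNReal.rpow_ne_top_of_nonneg (by linarith) ENNReal.ofReal_ne_top)]
  exact ENNReal.mul_lt_top (ENNReal.rpow_lt_top_of_nonneg (by linarith) ENNReal.ofReal_ne_top)
    (lintegral_stft_sq_lt_top d hfc hf hf2)

theorem bessel_eq_osc (d : ℕ) (k : ℝ) (f : E d → ℂ) (x : E d) :
    bessel d (-k) f x = (((2 * π) ^ d : ℝ) : ℂ)⁻¹ *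
      osc d (fun η => besselWeight d (k / 2) η * FT d f η) x := by
  simp only [bessel, osc, besselWeight, mul_assoc, neg_div]

theorem integral_norm_rpow_eq_toReal {α : Type*} [MeasurableSpace α] {μ : Measure α} {u : α → ℂ}
    (hu : AEStronglyMeasurable u μ) {p : ℝ} (hp : 0 ≤ p) :
    ∫ x, ‖u x‖ ^ p ∂μ = (∫⁻ x, ‖u x‖ₑ ^ p ∂μ).toReal := by
  rw [integral_eq_lintegral_of_nonneg_ae (Filter.Eventually.of_forall fun x => by positivity)
    (hu.norm.aemeasurable.pow_const p).aestronglyMeasurable]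
  congr 1
  refine lintegral_congr fun x => ?_
  rw [← ofReal_norm, ENNReal.ofReal_rpow_of_nonneg (norm_nonneg _) hp]

theorem FT_eq_fourier (d : ℕ) (f : E d → ℂ) (ξ : E d) :
    FT d f ξ = FourierTransform.fourier f ((2 * π)⁻¹ • ξ) := by
  rw [FT_eq_osc, osc_eq_fourier, neg_smul_neg]

theorem continuous_FT (d : ℕ) {f : E d → ℂ} (hf : Integrable f) : Continuous (FT d f) := by
  simp_rw [show FT d f = fun ξ => osc d f (-ξ) from funext (FT_eq_osc d f)]
  exact (continuous_osc d hf).comp continuous_neg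

theorem integrable_FT (d : ℕ) (f : SchwartzMap (E d) ℂ) : Integrable (FT d f) := by
  have h : Integrable (FourierTransform.fourier (f : E d → ℂ)) := by
    rw [← SchwartzMap.fourier_coe]
    exact (FourierTransform.fourier f).integrable
  rw [show FT d f = fun ξ => FourierTransform.fourier (f : E d → ℂ) ((2 * π)⁻¹ • ξ) from
    funext (FT_eq_fourier d f)]
  exact h.comp_smul (by positivity)

/-- the embedding `M^p ↪ L^p_{-k}` for `2 ≤ p < ∞`, `k = 2d(1/2 - 1/p)`:
`‖(1-Δ)^{-k/2} f‖_{L^p(ℝ^d)} ≤ C·‖V_g f‖_{L^p(ℝ^{2d})}` for Schwartz `f`. -/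
theorem stmt8 (d : ℕ) (hd : 1 ≤ d) (p : ℝ) (hp : 2 ≤ p)
    (k : ℝ) (hk : k = 2 * d * (1 / 2 - 1 / p)) :
    ∃ C > (0 : ℝ), ∀ f : SchwartzMap (E d) ℂ,
      (∫ x : E d, ‖bessel d (-k) (⇑f) x‖ ^ p) ^ (1 / p) ≤
        C * (∫ z : P d, ‖stft d (⇑f) z‖ ^ p) ^ (1 / p) := by
  have hp0 : 0 < p := by linarith
  have hkp : 2 * (k / 2 * p) = d * (p - 2) := by
    rw [hk]; field_simp
  have hk0 : 0 ≤ k / 2 := by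
    have : (0 : ℝ) ≤ d * (p - 2) := mul_nonneg (Nat.cast_nonneg d) (by linarith)
    rw [← hkp] at this
    nlinarith
  obtain ⟨c, hc, h⟩ := lintegral_osc_besselWeight_FT_le d hd hp hk0 hkp
  refine ⟨(c.toReal + 1) ^ (1 / p), by positivity, fun f => ?_⟩
  have hf2 : MemLp (f : E d → ℂ) 2 := f.memLp 2
  have hF := integrable_FT d f
  have hG : Integrable fun η => besselWeight d (k / 2) η * FT d f η :=
    hF.bdd_mul (c := 1) (continuous_besselWeight d _).aestronglyMeasurable
      (Filter.Eventually.of_forall fun η => norm_besselWeight_le_one d hk0 η)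
  have hu : Continuous (bessel d (-k) f) := by
    rw [show bessel d (-k) f = _ from funext (bessel_eq_osc d k f)]
    exact continuous_const.mul (continuous_osc d hG)
  have hV := lintegral_stft_rpow_lt_top d hp f.continuous f.integrable hf2
  have hle : ∫⁻ x, ‖bessel d (-k) f x‖ₑ ^ p ≤ c * ∫⁻ z : P d, ‖stft d f z‖ₑ ^ p := by
    refine le_trans (lintegral_mono fun x => ENNReal.rpow_le_rpow ?_ hp0.le)
      (h f f.continuous f.integrable (continuous_FT d f.integrable) hF)
    rw [bessel_eq_osc, enorm_mul, enorm_inv (by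
      exact_mod_cast (by positivity : ((2 * π) ^ d : ℝ) ≠ 0))]
    exact mul_le_of_le_one_left' (ENNReal.inv_le_one.2 (one_le_enorm_ofReal
      (one_le_pow₀ (by linarith [Real.pi_gt_three]))))
  rw [← Real.mul_rpow (by positivity) (by positivity)]
  refine Real.rpow_le_rpow (by positivity) ?_ (by positivity)
  rw [integral_norm_rpow_eq_toReal hu.aestronglyMeasurable hp0.le,
    integral_norm_rpow_eq_toReal (measurable_stft d f.continuous).aestronglyMeasurable hp0.le]
  refine (ENNReal.toReal_mono (ENNReal.mul_ne_top hc hV.ne) hle).trans ?_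
  rw [ENNReal.toReal_mul]
  gcongr
  linarith
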